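/- arXiv:math/0311303 — 4 statements merged into one kernel-verified Lean document; each statement's English description precedes it below -/
import Mathlib

section
/- τ_{2n} is a cocycle in the normalized Hochschild cochain complex of A^pol_{2n}: τ_{2n}(a_0⊗⋯⊗a_{2n}) vanishes whenever one of a_1,…,a_{2n} lies in K·1, and for all a_0,…,a_{2n+1} ∈ A^pol_{2n} one has τ_{2n}(a_0⋆a_1⊗a_2⊗⋯⊗a_{2n+1}) + ∑_{j=1}^{2n} (−1)^j τ_{2n}(a_0⊗⋯⊗a_j⋆a_{j+1}⊗⋯⊗a_{2n+1}) − τ_{2n}(a_{2n+1}⋆a_0⊗a_1⊗⋯⊗a_{2n}) = 0. -/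
noncomputable section
open MvPolynomial MeasureTheory

/-- The ground ring `K = ℂ[ε,ε⁻¹]` of Laurent polynomials in `ε`. -/
abbrev Kc : Type := LaurentPolynomial ℂ

/-- The element `ε ∈ K`. -/
def eps : Kc := LaurentPolynomial.T 1

/-- The underlying space of the polynomial Weyl algebra `A^pol_{2n}`:
polynomials in the variables `y_1, …, y_{2n}` (with `y_{2r-1} = p_r`, `y_{2r} = q_r`,
`0`-indexed below) over `K`. -/
abbrev Apol (n : ℕ) : Type := MvPolynomial (Fin (2*n)) Kc

/-- The `k`-fold tensor power `A^{⊗k}` of `A = A^pol_{2n}` over `K`, realized as the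
polynomial ring in `k` groups of `2n` variables. -/
abbrev Tens (n k : ℕ) : Type := MvPolynomial (Fin k × Fin (2*n)) Kc

/-- index of `p_r` among the variables `y` (0-indexed). -/
def pVar (n : ℕ) (r : Fin n) : Fin (2*n) := ⟨2*r.1, by have := r.2; omega⟩
/-- index of `q_r` among the variables `y` (0-indexed). -/
def qVar (n : ℕ) (r : Fin n) : Fin (2*n) := ⟨2*r.1+1, by have := r.2; omega⟩

/-- Partial derivative in the variable `y_v` of the `i`-th tensor factor, as a `K`-linear
endomorphism of `A^{⊗k}`. -/
def Dop (n k : ℕ) (i : Fin k) (v : Fin (2*n)) : Module.End Kc (Tens n k) :=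
  (pderiv (i, v)).toLinearMap

/-- The operator `α_{ij}` on `A^{⊗k}`:
`α_{ij} = (1/2) ∑_r (∂_{p_r}⊗∂_{q_r} − ∂_{q_r}⊗∂_{p_r})` acting on factors `i` and `j`.
By construction `α_{ji} = −α_{ij}`. -/
def alphaOp (n k : ℕ) (i j : Fin k) : Module.End Kc (Tens n k) :=
  algebraMap ℂ Kc (1/2) • ∑ r : Fin n,
    (Dop n k i (pVar n r) * Dop n k j (qVar n r) - Dop n k i (qVar n r) * Dop n k j (pVar n r))

/-- The operator `π_{2n}` on `A^{⊗(2n+1)}`: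
`π_{2n}(a_0⊗⋯⊗a_{2n}) = ∑_{σ∈S_{2n}} sign(σ) a_0⊗∂_{y_{σ(1)}}a_1⊗⋯⊗∂_{y_{σ(2n)}}a_{2n}`. -/
def piOp (n : ℕ) : Module.End Kc (Tens n (2*n+1)) :=
  ∑ σ : Equiv.Perm (Fin (2*n)),
    (Equiv.Perm.sign σ : ℤ) •
      (List.ofFn (fun m : Fin (2*n) => Dop n (2*n+1) m.succ (σ m))).prod

/-- Pairs `i < j` in `Fin m`. -/
abbrev Pairs (m : ℕ) : Type := {p : Fin m × Fin m // p.1 < p.2}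

/-- The simplex `Δ_m = {0 ≤ u_1 ≤ ⋯ ≤ u_m ≤ 1}` in `ℝ^m`. -/
def simplexSet (m : ℕ) : Set (Fin m → ℝ) :=
  {u | (∀ i, 0 ≤ u i ∧ u i ≤ 1) ∧ ∀ i j : Fin m, i ≤ j → u i ≤ u j}

/-- Extension of `u : ℝ^m` to `ℝ^{m+1}` by the convention `u_0 = 0`. -/
def cons0 (m : ℕ) (u : Fin m → ℝ) : Fin (m+1) → ℝ := Fin.cons 0 u

/-- The (commuting) product `∏_{i<j} α_{ij}^{K(i,j)}`. -/
def alphaPowProd (n k : ℕ) (K : Pairs k → ℕ) : Module.End Kc (Tens n k) :=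
  (Finset.univ.toList.map (fun p : Pairs k => alphaOp n k p.1.1 p.1.2 ^ (K p))).prod

/-- The Hochschild cochain `τ_{2n} : A^{⊗(2n+1)} → K`,
`τ_{2n}(a) = μ_{2n} ∫_{Δ_{2n}} ∏_{0≤i<j≤2n} e^{ε(2u_i−2u_j+1)α_{ij}} π_{2n}(a) du`,
with the exponentials expanded as (locally finite) Taylor series and integrated term by
term; `μ` takes the product of the constant terms of the factors. -/
def tau (n : ℕ) (a : Tens n (2*n+1)) : Kc :=
  ∑ K ∈ Fintype.piFinset (fun _ : Pairs (2*n+1) => Finset.range (a.totalDegree + 1)),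
    (algebraMap ℂ Kc
        ((((∫ u in simplexSet (2*n),
            ∏ p : Pairs (2*n+1),
              (2 * cons0 (2*n) u p.1.1 - 2 * cons0 (2*n) u p.1.2 + 1) ^ (K p)) : ℝ) : ℂ)
          * (∏ p : Pairs (2*n+1), ((K p).factorial : ℂ))⁻¹)
        * eps ^ (∑ p : Pairs (2*n+1), K p)) •
      constantCoeff (alphaPowProd n (2*n+1) K (piOp n a))

/-- The embedding of `A` as the `i`-th tensor factor of `A^{⊗k}`. -/
def embA (n k : ℕ) (i : Fin k) : Apol n →ₐ[Kc] Tens n k :=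
  rename (fun v => (i, v))

/-- The elementary tensor `a_0 ⊗ ⋯ ⊗ a_{k-1} ∈ A^{⊗k}`. -/
def elemT {n k : ℕ} (a : Fin k → Apol n) : Tens n k :=
  ∏ i : Fin k, embA n k i (a i)

/-- `exp(ε f)` applied to `a`, for a locally nilpotent operator `f` that strictly decreases
total degree (so that the series is finite on every argument). -/
def expEps {n k : ℕ} (f : Module.End Kc (Tens n k)) (a : Tens n k) : Tens n k :=
  ∑ m ∈ Finset.range (a.totalDegree + 1),
    (algebraMap ℂ Kc ((m.factorial : ℂ)⁻¹) * eps ^ m) • (f ^ m) a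

/-- The Moyal star product `f ⋆ g = m(exp(εα)(f⊗g))` on `A^pol_{2n}`. -/
def moyal (n : ℕ) (f g : Apol n) : Apol n :=
  aeval (fun v : Fin 2 × Fin (2*n) => (X v.2 : Apol n))
    (expEps (alphaOp n 2 0 1) (elemT ![f, g]))

/-- The bracket `[f,g]_ε = (1/ε)(f⋆g − g⋆f)`. -/
def brkt (n : ℕ) (f g : Apol n) : Apol n :=
  (LaurentPolynomial.T (-1) : Kc) • (moyal n f g - moyal n g f)

/-- `sp_{2n}`, identified with the space of homogeneous quadratic polynomials in the `y`'s
with complex coefficients, as a ℂ-submodule of `A^pol_{2n}`. -/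
def spSub (n : ℕ) : Submodule ℂ (Apol n) :=
  Submodule.span ℂ {f : Apol n | ∃ i j : Fin (2*n), f = X i * X j}


/-- The `j`-th face of the Hochschild differential applied to `a_0,…,a_{k+1}`:
multiply the `j`-th and `(j+1)`-st entries with the Moyal product
(`j` ranges over `0,…,k`). -/
def hochFace (n k : ℕ) (j : Fin (k+1)) (a : Fin (k+2) → Apol n) : Fin (k+1) → Apol n :=
  fun i =>
    if h1 : i.1 < j.1 then a ⟨i.1, by have := i.2; omega⟩
    else if h2 : i.1 = j.1 then
      moyal n (a ⟨j.1, by have := j.2; omega⟩) (a ⟨j.1+1, by have := j.2; omega⟩)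
    else a ⟨i.1+1, by have := i.2; omega⟩

/-- The extended vector `(0, w_1, …, w_d, 1)`, indexed by naturals. -/
def We {B : Type*} [Zero B] [One B] {d : ℕ} (w : Fin d → B) (i : ℕ) : B :=
  if i = 0 then 0 else if h : i - 1 < d then w ⟨i - 1, h⟩ else 1

/-- Duplicate the entry at extended position `e`. -/
def dupV {B : Type*} [Zero B] [One B] {d : ℕ} (w : Fin d → B) (e : ℕ) (i : Fin (d+1)) : B :=
  We w (if i.1 + 1 ≤ e then i.1 + 1 else i.1)

lemma We_succ {B : Type*} [Zero B] [One B] {d : ℕ} (w : Fin d → B) (i : Fin d) :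
    We w (i.1+1) = w i := by
  simp [We]

lemma insertNth_up {B : Type*} [Zero B] [One B] {d : ℕ} (w : Fin d → B) (k : Fin (d+1)) :
    (k.insertNth (We w (k.1+1)) w : Fin (d+1) → B) = dupV w (k.1+1) := by
  rw [Fin.insertNth_eq_iff]
  refine ⟨by simp [dupV], ?_⟩
  funext j
  simp only [Fin.removeNth, dupV]
  rw [← We_succ w j]
  congr 1
  by_cases h : j.castSucc < k
  · rw [Fin.succAbove_of_castSucc_lt _ _ h]
    have : j.1 < k.1 := h
    simp; omega
  · rw [Fin.succAbove_of_le_castSucc _ _ (not_lt.mp h)]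
    have : ¬ j.1 < k.1 := h
    simp; omega

lemma insertNth_lo {B : Type*} [Zero B] [One B] {d : ℕ} (w : Fin d → B) (k : Fin (d+1)) :
    (k.insertNth (We w k.1) w : Fin (d+1) → B) = dupV w k.1 := by
  rw [Fin.insertNth_eq_iff]
  refine ⟨by simp [dupV], ?_⟩
  funext j
  simp only [Fin.removeNth, dupV]
  rw [← We_succ w j]
  congr 1
  by_cases h : j.castSucc < k
  · rw [Fin.succAbove_of_castSucc_lt _ _ h]
    have : j.1 < k.1 := h
    simp; omega
  · rw [Fin.succAbove_of_le_castSucc _ _ (not_lt.mp h)]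
    have : ¬ j.1 < k.1 := h
    simp; omega

lemma We_mono {d : ℕ} {w : Fin d → ℝ} (hw : w ∈ simplexSet d) {i j : ℕ} (hij : i ≤ j) :
    We w i ≤ We w j := by
  obtain ⟨h1, h2⟩ := hw
  unfold We
  split_ifs with a b c e f g <;> try omega
  · exact le_rfl
  · exact (h1 _).1
  · exact zero_le_one
  · apply h2; simp; omega
  · exact (h1 _).2
  · exact le_rfl

lemma mem_simplex_iff {d : ℕ} (w : Fin d → ℝ) :
    w ∈ simplexSet d ↔ ∀ i : ℕ, i ≤ d → We w i ≤ We w (i+1) := by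
  constructor
  · intro hw i _
    exact We_mono hw (Nat.le_succ i)
  · intro h
    have key : ∀ m i : ℕ, i + m ≤ d + 1 → We w i ≤ We w (i+m) := by
      intro m
      induction m with
      | zero => intro i _; exact le_rfl
      | succ m ih => intro i hi; exact (ih i (by omega)).trans (h (i+m) (by omega))
    refine ⟨fun i => ⟨?_, ?_⟩, fun i j hij => ?_⟩
    · have := key (i.1+1) 0 (by omega)
      rw [Nat.zero_add, We_succ] at this
      simpa [We] using this
    · have := key (d - i.1) (i.1+1) (by omega)
      rw [We_succ] at this
      refine this.trans (le_of_eq ?_)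
      have : i.1 + 1 + (d - i.1) = d + 1 := by omega
      rw [this]; simp [We]
    · have hij' : i.1 ≤ j.1 := hij
      have := key (j.1 - i.1) (i.1+1) (by omega)
      rw [We_succ] at this
      have e : i.1 + 1 + (j.1 - i.1) = j.1+1 := by omega
      rwa [e, We_succ] at this

lemma We_insertNth {d : ℕ} (w : Fin d → ℝ) (t : ℝ) (k : Fin (d+1)) (i : ℕ) :
    We (k.insertNth t w : Fin (d+1) → ℝ) i =
      if i ≤ k.1 then We w i else if i = k.1 + 1 then t else We w (i-1) := by
  by_cases h0 : i = 0
  · subst h0; simp [We]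
  by_cases hi : i - 1 < d + 1
  · obtain ⟨j, rfl⟩ : ∃ j : Fin (d+1), i = j.1 + 1 := ⟨⟨i-1, hi⟩, by simp; omega⟩
    rw [We_succ]
    by_cases hjk : j = k
    · subst hjk; simp
    · obtain ⟨l, rfl⟩ := Fin.exists_succAbove_eq hjk
      rw [Fin.insertNth_apply_succAbove]
      by_cases h : l.castSucc < k
      · rw [Fin.succAbove_of_castSucc_lt _ _ h]
        have h' : l.1 < k.1 := h
        rw [if_pos (by simp; omega)]
        simp [We_succ]
      · rw [Fin.succAbove_of_le_castSucc _ _ (not_lt.mp h)]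
        have h' : ¬ l.1 < k.1 := h
        rw [if_neg (by simp; omega), if_neg (by simp; omega)]
        simp [We_succ]
  · have := k.2
    rw [if_neg (by omega), if_neg (by omega)]
    simp only [We, h0, if_false, hi, dif_neg, not_false_eq_true]
    rw [if_neg (by omega), dif_neg (by omega)]

lemma insertNth_mem_simplex {d : ℕ} (w : Fin d → ℝ) (t : ℝ) (k : Fin (d+1)) :
    (k.insertNth t w : Fin (d+1) → ℝ) ∈ simplexSet (d+1) ↔
      w ∈ simplexSet d ∧ We w k.1 ≤ t ∧ t ≤ We w (k.1+1) := by
  have hk := k.2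
  constructor
  · intro h
    have h1 : We w k.1 ≤ t := by
      have := We_mono h (Nat.le_succ k.1)
      simpa [We_insertNth] using this
    have h2 : t ≤ We w (k.1+1) := by
      have := We_mono h (Nat.le_succ (k.1+1))
      simpa [We_insertNth] using this
    refine ⟨?_, h1, h2⟩
    rw [mem_simplex_iff]
    intro i hi
    rcases lt_trichotomy i k.1 with hik | hik | hik
    · have := We_mono h (Nat.le_succ i)
      rwa [We_insertNth, We_insertNth, if_pos (by omega), if_pos (by omega)] at this
    · rw [hik]; exact h1.trans h2
    · have := We_mono h (Nat.le_succ (i+1))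
      rwa [We_insertNth, We_insertNth, if_neg (by omega), if_neg (by omega), if_neg (by omega),
        if_neg (by omega)] at this
  · rintro ⟨hw, h1, h2⟩
    rw [mem_simplex_iff]
    intro i hi
    rw [We_insertNth, We_insertNth]
    split_ifs with a b c e f g <;> try omega
    · exact We_mono hw (by omega)
    · have : i = k.1 := by omega
      rw [this]; exact h1
    · subst e; exact h2
    · exact We_mono hw (by omega)

lemma isClosed_simplex (d : ℕ) : IsClosed (simplexSet d) := by
  have : simplexSet d = (⋂ i, {u : Fin d → ℝ | 0 ≤ u i ∧ u i ≤ 1}) ∩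
      ⋂ i, ⋂ j, {u : Fin d → ℝ | i ≤ j → u i ≤ u j} := by
    ext u; simp [simplexSet]
  rw [this]
  refine IsClosed.inter (isClosed_iInter fun i => ?_)
    (isClosed_iInter fun i => isClosed_iInter fun j => ?_)
  · exact (isClosed_le continuous_const (continuous_apply i)).inter
      (isClosed_le (continuous_apply i) continuous_const)
  · by_cases h : i ≤ j
    · simp only [h, true_imp_iff]
      exact isClosed_le (continuous_apply i) (continuous_apply j)
    · simp [h]

lemma isCompact_simplex (d : ℕ) : IsCompact (simplexSet d) := by
  refine IsCompact.of_isClosed_subset (isCompact_univ_pi fun _ : Fin d => isCompact_Icc (a := (0:ℝ)) (b := 1))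
    (isClosed_simplex d) ?_
  intro u hu i _
  exact hu.1 i

lemma integral_simplex_succ {d : ℕ} (k : Fin (d+1)) (f : (Fin (d+1) → ℝ) → ℝ)
    (hf : Continuous f) :
    ∫ u in simplexSet (d+1), f u =
      ∫ w in simplexSet d, ∫ t in (We w k.1)..(We w (k.1+1)), f (k.insertNth t w) := by
  have hms := (isClosed_simplex (d+1)).measurableSet
  have hms' := (isClosed_simplex d).measurableSet
  rw [← integral_indicator hms, ← integral_indicator hms']
  have hmp := (volume_preserving_piFinSuccAbove (fun _ : Fin (d+1) => ℝ) k).symm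
  rw [← hmp.integral_comp']
  have hIntA : Integrable ((simplexSet (d+1)).indicator f) := by
    rw [integrable_indicator_iff hms]
    exact hf.continuousOn.integrableOn_compact (isCompact_simplex _)
  have hIntB := (hmp.integrable_comp_emb (MeasurableEquiv.measurableEmbedding _)).mpr hIntA
  rw [Measure.volume_eq_prod] at hIntB ⊢
  refine (integral_prod_symm _ hIntB).trans ?_
  congr 1
  funext w
  change ∫ t : ℝ, (simplexSet (d+1)).indicator f (k.insertNth t w) = _
  by_cases hw : w ∈ simplexSet d
  · rw [Set.indicator_of_mem hw, intervalIntegral.integral_of_le (We_mono hw (Nat.le_succ _)),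
      ← integral_Icc_eq_integral_Ioc, ← integral_indicator measurableSet_Icc]
    congr 1
    funext t
    by_cases ht : t ∈ Set.Icc (We w k.1) (We w (k.1+1))
    · rw [Set.indicator_of_mem ht, Set.indicator_of_mem]
      exact (insertNth_mem_simplex w t k).2 ⟨hw, ht.1, ht.2⟩
    · rw [Set.indicator_of_notMem ht, Set.indicator_of_notMem]
      intro h
      exact ht ⟨((insertNth_mem_simplex w t k).1 h).2.1, ((insertNth_mem_simplex w t k).1 h).2.2⟩
  · rw [Set.indicator_of_notMem hw]
    have : (fun t : ℝ => (simplexSet (d+1)).indicator f (k.insertNth t w)) = fun _ => 0 := by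
      funext t
      rw [Set.indicator_of_notMem]
      intro h
      exact hw ((insertNth_mem_simplex w t k).1 h).1
    rw [this]; simp

lemma hasDerivAt_eval_insertNth {d : ℕ} (k : Fin (d+1)) (w : Fin d → ℝ)
    (P : MvPolynomial (Fin (d+1)) ℝ) (t : ℝ) :
    HasDerivAt (fun t : ℝ => eval (k.insertNth t w : Fin (d+1) → ℝ) P)
      (eval (k.insertNth t w : Fin (d+1) → ℝ) (pderiv k P)) t := by
  induction P using MvPolynomial.induction_on with
  | C a => simpa using hasDerivAt_const t a
  | add p q hp hq =>
    simp only [map_add]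
    exact HasDerivAt.fun_add hp hq
  | mul_X p i hp =>
    have hX : HasDerivAt (fun t : ℝ => (k.insertNth t w : Fin (d+1) → ℝ) i)
        (eval (k.insertNth t w : Fin (d+1) → ℝ) (pderiv k (X i : MvPolynomial (Fin (d+1)) ℝ))) t := by
      by_cases h : i = k
      · subst h; simpa using hasDerivAt_id' t
      · obtain ⟨l, rfl⟩ := Fin.exists_succAbove_eq h
        rw [pderiv_X_of_ne h]
        simpa using hasDerivAt_const t (w l)
    have := HasDerivAt.fun_mul hp hX
    rw [Derivation.leibniz]
    simp only [map_mul, eval_X, map_add, smul_eq_mul]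
    exact this.congr_deriv (by ring)

lemma stokes_real {d : ℕ} (k : Fin (d+1)) (P : MvPolynomial (Fin (d+1)) ℝ) :
    ∫ u in simplexSet (d+1), eval u (pderiv k P) =
      (∫ w in simplexSet d, eval (dupV w (k.1+1)) P) - ∫ w in simplexSet d, eval (dupV w k.1) P := by
  rw [integral_simplex_succ k _ (MvPolynomial.continuous_eval _)]
  have hc : ∀ e : ℕ, Continuous fun w : Fin d → ℝ => eval (dupV w e) P := by
    intro e
    refine (MvPolynomial.continuous_eval P).comp (continuous_pi fun i => ?_)
    unfold dupV We
    split_ifs <;> fun_prop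
  rw [← integral_sub]
  · congr 1
    funext w
    rw [intervalIntegral.integral_eq_sub_of_hasDerivAt
      (fun t _ => hasDerivAt_eval_insertNth k w P t), insertNth_up, insertNth_lo]
    apply Continuous.intervalIntegrable
    refine (MvPolynomial.continuous_eval _).comp ?_
    exact Continuous.finInsertNth k continuous_id continuous_const
  · exact (hc _).continuousOn.integrableOn_compact (isCompact_simplex _)
  · exact (hc _).continuousOn.integrableOn_compact (isCompact_simplex _)

/-- Integration over the simplex of polynomials with coefficients in an `ℝ`-algebra. -/
def IntR (R : Type*) [CommRing R] [Algebra ℝ R] (d : ℕ) : MvPolynomial (Fin d) R →ₗ[R] R :=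
  (basisMonomials (Fin d) R).constr R
    (fun s => algebraMap ℝ R (∫ u in simplexSet d, eval u (monomial s (1:ℝ))))

section IntR
variable {R : Type*} [CommRing R] [Algebra ℝ R] {d : ℕ}

lemma IntR_C_mul (r : R) (P : MvPolynomial (Fin d) R) : IntR R d (C r * P) = r * IntR R d P := by
  rw [← smul_eq_C_mul, map_smul, smul_eq_mul]

lemma IntR_monomial (s : Fin d →₀ ℕ) : IntR R d (monomial s 1) =
    algebraMap ℝ R (∫ u in simplexSet d, eval u (monomial s (1:ℝ))) := by
  have := (basisMonomials (Fin d) R).constr_basis R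
    (fun s => algebraMap ℝ R (∫ u in simplexSet d, eval u (monomial s (1:ℝ)))) s
  rwa [coe_basisMonomials] at this

lemma integrableOn_eval (p : MvPolynomial (Fin d) ℝ) :
    IntegrableOn (fun u => eval u p) (simplexSet d) :=
  (MvPolynomial.continuous_eval p).continuousOn.integrableOn_compact (isCompact_simplex _)

lemma IntR_map (p : MvPolynomial (Fin d) ℝ) :
    IntR R d (map (algebraMap ℝ R) p) = algebraMap ℝ R (∫ u in simplexSet d, eval u p) := by
  induction p using MvPolynomial.induction_on' with
  | monomial s a =>
    have h1 : (monomial s a : MvPolynomial (Fin d) ℝ) = C a * monomial s 1 := by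
      rw [C_mul_monomial, mul_one]
    rw [h1, map_mul, map_C, map_monomial, map_one, IntR_C_mul, IntR_monomial, ← map_mul]
    congr 1
    rw [← integral_const_mul]
    simp
  | add p q hp hq =>
    simp only [map_add]
    rw [hp, hq, ← map_add, integral_add (integrableOn_eval p) (integrableOn_eval q)]

lemma eval_aeval_dupV (w : Fin d → ℝ) (e : ℕ) (P : MvPolynomial (Fin (d+1)) ℝ) :
    eval w (aeval (dupV (X : Fin d → MvPolynomial (Fin d) ℝ) e) P) = eval (dupV w e) P := by
  have : (eval w).comp (aeval (dupV (X : Fin d → MvPolynomial (Fin d) ℝ) e)).toRingHom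
      = eval (dupV w e) := by
    apply MvPolynomial.ringHom_ext
    · intro r; simp
    · intro i
      simp [dupV, We]
      split_ifs <;> simp
  exact congrArg (fun f => f P) this

lemma map_aeval_dupV (e : ℕ) (P : MvPolynomial (Fin (d+1)) ℝ) :
    aeval (dupV (X : Fin d → MvPolynomial (Fin d) R) e) (map (algebraMap ℝ R) P) =
      map (algebraMap ℝ R) (aeval (dupV (X : Fin d → MvPolynomial (Fin d) ℝ) e) P) := by
  have : (aeval (dupV (X : Fin d → MvPolynomial (Fin d) R) e)).toRingHom.comp
      (map (algebraMap ℝ R)) =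
      (map (algebraMap ℝ R)).comp
        (aeval (dupV (X : Fin d → MvPolynomial (Fin d) ℝ) e)).toRingHom := by
    apply MvPolynomial.ringHom_ext
    · intro r; simp [MvPolynomial.algebraMap_eq]
    · intro i
      simp [dupV, We]
      split_ifs <;> simp
  exact congrArg (fun f => f P) this

lemma stokesR (k : Fin (d+1)) (P : MvPolynomial (Fin (d+1)) R) :
    IntR R (d+1) (pderiv k P) =
      IntR R d (aeval (dupV (X : Fin d → MvPolynomial (Fin d) R) (k.1+1)) P)
      - IntR R d (aeval (dupV (X : Fin d → MvPolynomial (Fin d) R) k.1) P) := by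
  induction P using MvPolynomial.induction_on' with
  | monomial s a =>
    have h1 : (monomial s a : MvPolynomial (Fin (d+1)) R) =
        C a * map (algebraMap ℝ R) (monomial s 1) := by
      rw [map_monomial, map_one, C_mul_monomial, mul_one]
    rw [h1, pderiv_C_mul, pderiv_map, IntR_C_mul, IntR_map, stokes_real]
    simp only [map_mul, map_aeval_dupV, aeval_C, MvPolynomial.algebraMap_eq, IntR_C_mul]
    rw [IntR_map, IntR_map]
    simp only [eval_aeval_dupV, map_sub]
    ring
  | add p q hp hq =>
    simp only [map_add]
    rw [hp, hq]; ring
end IntR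

open scoped IsMulCommutative in
lemma exists_aeval_comm {K A ι : Type*} [CommRing K] [Ring A] [Algebra K A] (f : ι → A)
    (hf : ∀ i j, f i * f j = f j * f i) :
    ∃ φ : MvPolynomial ι K →ₐ[K] A, ∀ i, φ (X i) = f i := by
  have hcomm : ∀ a ∈ Set.range f, ∀ b ∈ Set.range f, a * b = b * a := by
    rintro _ ⟨i, rfl⟩ _ ⟨j, rfl⟩
    exact hf i j
  have := Algebra.isMulCommutative_adjoin K hcomm
  refine ⟨(Algebra.adjoin K (Set.range f)).val.comp
    (aeval (fun i => (⟨f i, Algebra.subset_adjoin ⟨i, rfl⟩⟩ : Algebra.adjoin K (Set.range f)))), ?_⟩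
  intro i
  simp

lemma pderiv_comm' {σ R : Type*} [CommRing R] (i j : σ) (p : MvPolynomial σ R) :
    pderiv i (pderiv j p) = pderiv j (pderiv i p) := by
  have : ⁅(pderiv i : Derivation R (MvPolynomial σ R) (MvPolynomial σ R)),
      (pderiv j : Derivation R (MvPolynomial σ R) (MvPolynomial σ R))⁆ = 0 := by
    apply MvPolynomial.derivation_ext
    intro l
    classical
    simp [Derivation.commutator_apply, pderiv_X, Pi.single_apply, apply_ite]
  have h := congrArg (fun D : Derivation R (MvPolynomial σ R) (MvPolynomial σ R) => D p) this
  simp only [Derivation.commutator_apply, Derivation.coe_zero, Pi.zero_apply] at h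
  exact sub_eq_zero.mp h

lemma Dop_apply (n k : ℕ) (i : Fin k) (v : Fin (2*n)) (b : Tens n k) :
    Dop n k i v b = pderiv (i, v) b := rfl

lemma Dop_comm (n k : ℕ) (x y : Fin k × Fin (2*n)) :
    Dop n k x.1 x.2 * Dop n k y.1 y.2 = Dop n k y.1 y.2 * Dop n k x.1 x.2 := by
  apply LinearMap.ext; intro q
  rw [Module.End.mul_apply, Module.End.mul_apply]
  simp only [Dop_apply]
  exact pderiv_comm' (x.1, x.2) (y.1, y.2) q

/-- The constant coefficient differential operator with a given symbol. -/
def Op (n k : ℕ) : Tens n k →ₐ[Kc] Module.End Kc (Tens n k) :=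
  (exists_aeval_comm (fun x : Fin k × Fin (2*n) => Dop n k x.1 x.2) (Dop_comm n k)).choose

lemma Op_X (n k : ℕ) (x : Fin k × Fin (2*n)) : Op n k (X x) = Dop n k x.1 x.2 :=
  (exists_aeval_comm (fun x : Fin k × Fin (2*n) => Dop n k x.1 x.2) (Dop_comm n k)).choose_spec x

lemma Op_mul (n k : ℕ) (P Q b : Tens n k) : Op n k (P * Q) b = Op n k P (Op n k Q b) := by
  rw [map_mul]; rfl

lemma Op_C (n k : ℕ) (c : Kc) (b : Tens n k) : Op n k (C c) b = c • b := by
  rw [← MvPolynomial.algebraMap_eq, AlgHom.commutes]; rfl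

lemma Op_mul_X (n k : ℕ) (P b : Tens n k) (x : Fin k × Fin (2*n)) :
    Op n k (P * X x) b = Op n k P (pderiv x b) := by
  rw [Op_mul, Op_X]; rfl

lemma pderiv_degLT {σ R : Type*} [CommRing R] (i : σ) (p : MvPolynomial σ R) (d : ℕ)
    (h : ∀ s, d + 1 ≤ s.degree → coeff s p = 0) : ∀ s, d ≤ s.degree → coeff s (pderiv i p) = 0 := by
  intro s hs
  rw [coeff_pderiv, h, zero_mul]
  rw [map_add, Finsupp.degree_single]
  omega

lemma Op_monomial_eq_zero (n k : ℕ) (d : ℕ) : ∀ (b : Tens n k) (s : Fin k × Fin (2*n) →₀ ℕ),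
    s.degree = d → (∀ s, d ≤ s.degree → coeff s b = 0) → Op n k (monomial s 1) b = 0 := by
  induction d with
  | zero =>
    intro b s hs hb
    have : b = 0 := MvPolynomial.ext _ _ fun s => (hb s (Nat.zero_le _)).trans (coeff_zero s).symm
    rw [this, map_zero]
  | succ d ih =>
    intro b s hs hb
    have hs0 : s ≠ 0 := by rintro rfl; simp at hs
    obtain ⟨x, hx⟩ := Finsupp.ne_iff.mp hs0
    have hx' : Finsupp.single x 1 ≤ s := by
      rw [Finsupp.single_le_iff]
      simp at hx; omega
    have hsx : s = (s - Finsupp.single x 1) + Finsupp.single x 1 := (tsub_add_cancel_of_le hx').symm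
    have hm : (monomial s 1 : Tens n k) = monomial (s - Finsupp.single x 1) 1 * X x := by
      conv_lhs => rw [hsx]
      rw [X, monomial_mul, one_mul]
    rw [hm, Op_mul_X]
    apply ih
    · have := congrArg Finsupp.degree hsx
      rw [map_add, Finsupp.degree_single] at this
      omega
    · exact pderiv_degLT x b d hb

lemma Op_eq_zero (n k : ℕ) {d : ℕ} {P : Tens n k} (hP : P.IsHomogeneous d) {b : Tens n k}
    (hb : b.totalDegree < d) : Op n k P b = 0 := by
  rw [P.as_sum, map_sum, LinearMap.sum_apply]
  apply Finset.sum_eq_zero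
  intro s hs
  have h1 : (monomial s (coeff s P) : Tens n k) = C (coeff s P) * monomial s 1 := by
    rw [C_mul_monomial, mul_one]
  rw [h1, Op_mul, Op_monomial_eq_zero n k d b s, map_zero]
  · have := hP (mem_support_iff.mp hs)
    rw [← this, Finsupp.degree_eq_weight_one]; rfl
  · intro s hs
    apply coeff_eq_zero_of_totalDegree_lt
    rw [Finsupp.degree_apply] at hs
    exact hb.trans_le hs

lemma MvPolynomial.IsHomogeneous.congr_deg {σ R : Type*} [CommSemiring R] {p : MvPolynomial σ R}
    {a b : ℕ} (h : p.IsHomogeneous a) (hab : a = b) : p.IsHomogeneous b := hab ▸ h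

/-- Multiplication map along a map of index sets. -/
def mu (n : ℕ) {k k' : ℕ} (σ : Fin k' → Fin k) : Tens n k' →ₐ[Kc] Tens n k :=
  rename (fun x => (σ x.1, x.2))

/-- The induced map on symbols. -/
def de (n : ℕ) {k k' : ℕ} (σ : Fin k' → Fin k) : Tens n k →ₐ[Kc] Tens n k' :=
  aeval (fun x => ∑ i' : Fin k', if σ i' = x.1 then X (i', x.2) else 0)

lemma pderiv_mu (n : ℕ) {k k' : ℕ} (σ : Fin k' → Fin k) (x : Fin k × Fin (2*n)) (b : Tens n k') :
    pderiv x (mu n σ b) =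
      mu n σ (Op n k' (∑ i' : Fin k', if σ i' = x.1 then X (i', x.2) else 0) b) := by
  have key : ∀ b, Op n k' (∑ i' : Fin k', if σ i' = x.1 then X (i', x.2) else 0) b =
      ∑ i' : Fin k', if σ i' = x.1 then pderiv (i', x.2) b else 0 := by
    intro b
    rw [map_sum, LinearMap.sum_apply]
    apply Finset.sum_congr rfl
    intro i' _
    split_ifs
    · rw [Op_X]; rfl
    · simp
  rw [key]
  induction b using MvPolynomial.induction_on with
  | C a => simp [mu]
  | add p q hp hq =>
    simp only [map_add, hp, hq]
    rw [← map_add, ← Finset.sum_add_distrib]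
    congr 1
    apply Finset.sum_congr rfl
    intro i _
    split_ifs <;> simp
  | mul_X p y hp =>
    rw [map_mul, Derivation.leibniz, hp]
    have h2 : pderiv x (mu n σ (X y)) =
        mu n σ (∑ i' : Fin k', if σ i' = x.1 then pderiv (i', x.2) (X y : Tens n k') else 0) := by
      obtain ⟨y1, y2⟩ := y
      obtain ⟨x1, x2⟩ := x
      have : mu n σ (X (y1, y2)) = X (σ y1, y2) := by simp [mu]
      rw [this]
      classical
      by_cases h : x2 = y2
      · subst h
        by_cases h' : σ y1 = x1
        · subst h'
          rw [Finset.sum_eq_single y1]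
          · simp
          · intro i _ hi
            rw [pderiv_X_of_ne (by simpa using hi.symm)]
            simp
          · simp
        · rw [pderiv_X_of_ne (by simpa using h'), Finset.sum_eq_zero, map_zero]
          intro i _
          by_cases hi : i = y1
          · subst hi; simp [h']
          · rw [pderiv_X_of_ne (by simpa using fun h => hi h.symm)]
            simp
      · rw [pderiv_X_of_ne (by simpa using fun _ h' => h h'.symm), Finset.sum_eq_zero, map_zero]
        intro i _
        rw [pderiv_X_of_ne (by simpa using fun _ h' => h h'.symm)]
        simp
    rw [h2, smul_eq_mul, smul_eq_mul, ← map_mul, ← map_mul, ← map_add, Finset.mul_sum, Finset.mul_sum,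
      ← Finset.sum_add_distrib]
    congr 1
    apply Finset.sum_congr rfl
    intro i _
    split_ifs
    · rw [Derivation.leibniz, smul_eq_mul, smul_eq_mul]
    · simp

lemma Op_mu (n : ℕ) {k k' : ℕ} (σ : Fin k' → Fin k) (P : Tens n k) (b : Tens n k') :
    Op n k P (mu n σ b) = mu n σ (Op n k' (de n σ P) b) := by
  induction P using MvPolynomial.induction_on generalizing b with
  | C a =>
    have : de n σ (C a) = C a := by simp [de, MvPolynomial.algebraMap_eq]
    rw [this, Op_C, Op_C, map_smul]
  | add p q hp hq => simp only [map_add, LinearMap.add_apply, hp, hq]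
  | mul_X p x hp =>
    rw [Op_mul_X, pderiv_mu, hp, map_mul, Op_mul]
    congr 2
    simp [de]

lemma constantCoeff_mu (n : ℕ) {k k' : ℕ} (σ : Fin k' → Fin k) (b : Tens n k') :
    constantCoeff (mu n σ b) = constantCoeff b := by
  simp [mu]

/-- The symbol of `alphaOp`. -/
def al (n k : ℕ) (i j : Fin k) : Tens n k :=
  C (algebraMap ℂ Kc (1/2)) * ∑ r : Fin n,
    (X (i, pVar n r) * X (j, qVar n r) - X (i, qVar n r) * X (j, pVar n r))

lemma Op_al (n k : ℕ) (i j : Fin k) : Op n k (al n k i j) = alphaOp n k i j := by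
  rw [al, alphaOp, ← smul_eq_C_mul, map_smul, map_sum]
  simp only [map_sub, map_mul, Op_X]

lemma al_swap (n k : ℕ) (i j : Fin k) : al n k j i = - al n k i j := by
  apply eq_neg_of_add_eq_zero_left
  rw [al, al, ← mul_add, ← Finset.sum_add_distrib, Finset.sum_eq_zero, mul_zero]
  intro r _
  ring

lemma al_homog (n k : ℕ) (i j : Fin k) : (al n k i j).IsHomogeneous 2 := by
  refine IsHomogeneous.mul (m := 0) (n := 2) (isHomogeneous_C _ _) ?_
  apply IsHomogeneous.sum
  intro r _
  exact ((isHomogeneous_X _ _).mul (isHomogeneous_X _ _)).sub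
    ((isHomogeneous_X _ _).mul (isHomogeneous_X _ _))

/-- The symbol of `piOp`. -/
def pis (n : ℕ) : Tens n (2*n+1) :=
  Matrix.det (Matrix.of fun m v : Fin (2*n) => (X (m.succ, v) : Tens n (2*n+1)))

lemma Op_pis (n : ℕ) : Op n (2*n+1) (pis n) = piOp n := by
  rw [pis, ← Matrix.det_transpose, Matrix.det_apply, map_sum, piOp]
  apply Finset.sum_congr rfl
  intro σ _
  rw [Units.smul_def, map_zsmul]
  congr 1
  rw [← List.prod_ofFn, map_list_prod, List.map_ofFn]
  congr 2
  funext m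
  simp [Op_X]

lemma pis_homog (n : ℕ) : (pis n).IsHomogeneous (2*n) := by
  rw [pis, Matrix.det_apply]
  apply IsHomogeneous.sum
  intro σ _
  rw [Units.smul_def, zsmul_eq_mul]
  have h : ((((Equiv.Perm.sign σ : ℤˣ) : ℤ) : Tens n (2*n+1))) =
    C (((Equiv.Perm.sign σ : ℤˣ) : ℤ) : Kc) := by simp
  rw [h]
  have h2 : 0 + ∑ i : Fin (2*n), 1 = 2 * n := by simp
  refine (?_ : IsHomogeneous _ (0 + ∑ i : Fin (2*n), 1)).congr_deg h2
  refine (isHomogeneous_C _ _).mul ?_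
  apply IsHomogeneous.prod
  intro i _
  exact isHomogeneous_X _ _

/-- Pairing of symbols with tensors. -/
def Lf (n k : ℕ) (b : Tens n k) : Tens n k →ₗ[Kc] Kc where
  toFun P := constantCoeff (Op n k P b)
  map_add' P Q := by rw [map_add, LinearMap.add_apply, map_add]
  map_smul' c P := by
    rw [map_smul, LinearMap.smul_apply, smul_eq_C_mul, map_mul, constantCoeff_C]; rfl

lemma Lf_apply (n k : ℕ) (b P : Tens n k) : Lf n k b P = constantCoeff (Op n k P b) := rfl

lemma Lf_C_mul (n k : ℕ) (b P : Tens n k) (c : Kc) : Lf n k b (C c * P) = c * Lf n k b P := by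
  rw [← smul_eq_C_mul, map_smul, smul_eq_mul]

lemma Lf_eq_zero (n k : ℕ) {d : ℕ} {P : Tens n k} (hP : P.IsHomogeneous d) {b : Tens n k}
    (hb : b.totalDegree < d) : Lf n k b P = 0 := by
  rw [Lf_apply, Op_eq_zero n k hP hb, map_zero]

/-- The quadratic form in the exponent. -/
def Qq (n k d : ℕ) (u : Fin k → MvPolynomial (Fin d) (Tens n k)) :
    MvPolynomial (Fin d) (Tens n k) :=
  ∑ p : Pairs k, (2 * u p.1.1 - 2 * u p.1.2 + 1) * C (al n k p.1.1 p.1.2)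

/-- The order `m` part of the symbol of `τ`. -/
def Tm (n m : ℕ) : Tens n (2*n+1) :=
  IntR (Tens n (2*n+1)) (2*n) (Qq n (2*n+1) (2*n) (fun i => We X i.1) ^ m) * pis n

/-- product of powers of the symbols of `α`. -/
def alK (n k : ℕ) (K : Pairs k → ℕ) : Tens n k := ∏ p : Pairs k, al n k p.1.1 p.1.2 ^ (K p)

lemma Op_alK (n k : ℕ) (K : Pairs k → ℕ) : Op n k (alK n k K) = alphaPowProd n k K := by
  rw [alK, alphaPowProd, ← Finset.prod_map_toList, map_list_prod, List.map_map]
  congr 2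
  funext p
  simp only [Function.comp, map_pow, Op_al]

lemma alK_homog (n k : ℕ) (K : Pairs k → ℕ) : (alK n k K).IsHomogeneous (∑ p, 2 * K p) := by
  apply IsHomogeneous.prod
  intro p _
  exact (al_homog n k _ _).pow _

/-- the integral of the real weight. -/
def cK (d : ℕ) (K : Pairs (d+1) → ℕ) : ℝ :=
  ∫ u in simplexSet d, ∏ p : Pairs (d+1), (2 * cons0 d u p.1.1 - 2 * cons0 d u p.1.2 + 1) ^ (K p)

lemma cons0_eq (d : ℕ) (u : Fin d → ℝ) (i : Fin (d+1)) : cons0 d u i = We u i.1 := by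
  refine Fin.cases ?_ (fun j => ?_) i
  · simp [cons0, We]
  · simp [cons0, We]

lemma map_We {d : ℕ} {R S : Type*} [CommRing R] [CommRing S] (f : R →+* S) (i : ℕ) :
    map f (We (X : Fin d → MvPolynomial (Fin d) R) i) = We X i := by
  unfold We; split_ifs <;> simp

lemma eval_We {d : ℕ} (u : Fin d → ℝ) (i : ℕ) :
    eval u (We (X : Fin d → MvPolynomial (Fin d) ℝ) i) = We u i := by
  unfold We; split_ifs <;> simp

lemma IntR_prod (R : Type*) [CommRing R] [Algebra ℝ R] (d : ℕ) (K : Pairs (d+1) → ℕ) :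
    IntR R d (∏ p : Pairs (d+1), (2 * We X p.1.1.1 - 2 * We X p.1.2.1 + 1) ^ (K p)) =
      algebraMap ℝ R (cK d K) := by
  have h : (∏ p : Pairs (d+1), (2 * We X p.1.1.1 - 2 * We X p.1.2.1 + 1 : MvPolynomial (Fin d) R)
      ^ (K p)) = map (algebraMap ℝ R)
        (∏ p : Pairs (d+1), (2 * We X p.1.1.1 - 2 * We X p.1.2.1 + 1) ^ (K p)) := by
    simp [map_We]
  rw [h, IntR_map, cK]
  simp [eval_We, cons0_eq]

lemma Tm_eq (n m : ℕ) : Tm n m = ∑ K ∈ Finset.piAntidiag (Finset.univ : Finset (Pairs (2*n+1))) m,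
    C ((Nat.multinomial Finset.univ K : Kc) * algebraMap ℂ Kc ((cK (2*n) K : ℝ) : ℂ))
      * (alK n (2*n+1) K * pis n) := by
  rw [Tm, Qq, Finset.sum_pow_eq_sum_piAntidiag, map_sum, Finset.sum_mul]
  apply Finset.sum_congr rfl
  intro K _
  have h : (Nat.multinomial Finset.univ K : MvPolynomial (Fin (2*n)) (Tens n (2*n+1))) *
      ∏ p : Pairs (2*n+1), ((2 * We X p.1.1.1 - 2 * We X p.1.2.1 + 1) *
        C (al n (2*n+1) p.1.1 p.1.2)) ^ (K p) =
      C ((Nat.multinomial Finset.univ K : Tens n (2*n+1)) * alK n (2*n+1) K) *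
      ∏ p : Pairs (2*n+1), (2 * We X p.1.1.1 - 2 * We X p.1.2.1 + 1) ^ (K p) := by
    simp only [mul_pow, Finset.prod_mul_distrib, alK, map_mul, map_prod, map_pow, map_natCast]
    ring
  rw [h, IntR_C_mul, IntR_prod]
  have h2 : algebraMap ℝ (Tens n (2*n+1)) (cK (2*n) K) =
      C (algebraMap ℂ Kc ((cK (2*n) K : ℝ) : ℂ)) := by
    rw [IsScalarTower.algebraMap_apply ℝ Kc (Tens n (2*n+1)), MvPolynomial.algebraMap_eq,
      IsScalarTower.algebraMap_apply ℝ ℂ Kc]; rfl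
  rw [h2, map_mul, map_natCast]
  ring

lemma tau_formula (n M : ℕ) (b : Tens n (2*n+1)) (hM : b.totalDegree ≤ M) :
    tau n b = ∑ m ∈ Finset.range (M+1),
      (algebraMap ℂ Kc ((m.factorial : ℂ)⁻¹) * eps ^ m) * Lf n (2*n+1) b (Tm n m) := by
  set F : (Pairs (2*n+1) → ℕ) → Kc := fun K =>
    (algebraMap ℂ Kc (((cK (2*n) K : ℝ) : ℂ) * (∏ p : Pairs (2*n+1), ((K p).factorial : ℂ))⁻¹)
        * eps ^ (∑ p : Pairs (2*n+1), K p)) * Lf n (2*n+1) b (alK n (2*n+1) K * pis n) with hF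
  have hF0 : ∀ K, b.totalDegree < ∑ p, K p → F K = 0 := by
    intro K hK
    rw [hF]; simp only
    rw [Lf_eq_zero n (2*n+1) ((alK_homog n _ K).mul (pis_homog n)), mul_zero]
    rw [← Finset.mul_sum]; omega
  have h1 : tau n b = ∑ K ∈ Fintype.piFinset
      (fun _ : Pairs (2*n+1) => Finset.range (b.totalDegree + 1)), F K := by
    rw [tau]
    apply Finset.sum_congr rfl
    intro K _
    rw [hF]; simp only
    rw [Lf_apply, Op_mul, Op_alK, Op_pis, smul_eq_mul, cK]
  have h2 : ∀ m, (algebraMap ℂ Kc ((m.factorial : ℂ)⁻¹) * eps ^ m) * Lf n (2*n+1) b (Tm n m) =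
      ∑ K ∈ Finset.piAntidiag (Finset.univ : Finset (Pairs (2*n+1))) m, F K := by
    intro m
    rw [Tm_eq, map_sum, Finset.mul_sum]
    apply Finset.sum_congr rfl
    intro K hK
    rw [Finset.mem_piAntidiag] at hK
    rw [Lf_C_mul, hF]; simp only
    rw [← hK.1]
    have h3 : ((∑ p, K p).factorial : ℂ)⁻¹ * (Nat.multinomial Finset.univ K : ℂ) =
        (∏ p : Pairs (2*n+1), ((K p).factorial : ℂ))⁻¹ := by
      have := Nat.multinomial_spec Finset.univ K
      have h4 : ((∏ p, (K p).factorial : ℕ) : ℂ) * (Nat.multinomial Finset.univ K : ℂ) =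
        ((∑ p, K p).factorial : ℂ) := by exact_mod_cast this
      rw [← h4]
      have h5 : ((∏ p, (K p).factorial : ℕ) : ℂ) ≠ 0 := by
        rw [Nat.cast_ne_zero]; exact Finset.prod_ne_zero_iff.mpr fun p _ => Nat.factorial_ne_zero _
      have h6 : (Nat.multinomial Finset.univ K : ℂ) ≠ 0 := by
        intro h; rw [h, mul_zero] at h4
        exact Nat.factorial_ne_zero _ (by exact_mod_cast h4.symm)
      rw [mul_inv, mul_assoc, inv_mul_cancel₀ h6, mul_one]; push_cast; rfl
    rw [← h3]
    have h7 : (Nat.multinomial Finset.univ K : Kc) =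
      algebraMap ℂ Kc (Nat.multinomial Finset.univ K : ℂ) := (map_natCast _ _).symm
    rw [h7]
    simp only [map_mul]
    ring
  rw [h1, Finset.sum_congr rfl (fun m _ => h2 m), ← Finset.sum_biUnion]
  · apply Finset.sum_congr_of_eq_on_inter
    · intro K hK hK'
      apply hF0
      simp only [Finset.mem_biUnion, Finset.mem_range, Finset.mem_piAntidiag, not_exists, not_and] at hK'
      by_contra h
      exact hK' (∑ p, K p) (by omega) rfl (by simp)
    · intro K hK hK'
      apply hF0
      simp only [Fintype.mem_piFinset, Finset.mem_range, not_forall] at hK'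
      obtain ⟨p, hp⟩ := hK'
      have := Finset.single_le_sum (f := K) (fun _ _ => Nat.zero_le _) (Finset.mem_univ p)
      omega
    · intro _ _ _; rfl
  · intro a _ c _ hac
    apply Finset.disjoint_left.mpr
    intro K h1 h2
    rw [Finset.mem_piAntidiag] at h1 h2
    exact hac (h1.1.symm.trans h2.1)

lemma IntR_hom {R S : Type*} [CommRing R] [Algebra ℝ R] [CommRing S] [Algebra ℝ S] (f : R →+* S)
    (hf : ∀ r : ℝ, f (algebraMap ℝ R r) = algebraMap ℝ S r) (d : ℕ) (P : MvPolynomial (Fin d) R) :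
    f (IntR R d P) = IntR S d (map f P) := by
  induction P using MvPolynomial.induction_on' with
  | monomial s a =>
    have h1 : (monomial s a : MvPolynomial (Fin d) R) = C a * monomial s 1 := by
      rw [C_mul_monomial, mul_one]
    rw [h1, IntR_C_mul, map_mul (map f), map_C, map_monomial, map_one f, IntR_C_mul, IntR_monomial,
      IntR_monomial, map_mul, hf]
  | add p q hp hq => simp only [map_add, hp, hq]

lemma moyal_formula (n : ℕ) (f g : Apol n) (M : ℕ) (hM : (elemT ![f, g]).totalDegree ≤ M) :
    moyal n f g = ∑ m ∈ Finset.range (M+1), (algebraMap ℂ Kc ((m.factorial : ℂ)⁻¹) * eps ^ m) •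
      aeval (fun v : Fin 2 × Fin (2*n) => (X v.2 : Apol n))
        (Op n 2 (al n 2 0 1 ^ m) (elemT ![f, g])) := by
  rw [moyal, expEps, map_sum]
  simp only [map_smul]
  rw [Finset.sum_subset (Finset.range_mono (Nat.succ_le_succ hM))]
  · apply Finset.sum_congr rfl
    intro m _
    rw [map_pow, Op_al]
  · intro m _ hm
    rw [Finset.mem_range] at hm
    rw [← Op_al, ← map_pow, Op_eq_zero n 2 ((al_homog n 2 0 1).pow m), map_zero, smul_zero]
    omega

lemma Op_mu_mul (n : ℕ) {k k' : ℕ} (ι : Fin k → Fin k') (hι : Function.Injective ι)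
    (g : Tens n k') (hg : ∀ i v, pderiv (ι i, v) g = 0) (P h : Tens n k) :
    Op n k' (mu n ι P) (mu n ι h * g) = mu n ι (Op n k P h) * g := by
  have hinj : Function.Injective (fun x : Fin k × Fin (2*n) => (ι x.1, x.2)) := by
    rintro ⟨a, b⟩ ⟨c, e⟩ h
    simp only [Prod.mk.injEq] at h
    rw [hι h.1, h.2]
  induction P using MvPolynomial.induction_on generalizing h with
  | C c =>
    have : mu n ι (C c) = C c := by simp [mu]
    rw [this, Op_C, Op_C, map_smul, smul_mul_assoc]
  | add p q hp hq => simp only [map_add, LinearMap.add_apply, hp, hq, add_mul]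
  | mul_X p x hp =>
    have h1 : mu n ι (p * X x) = mu n ι p * X (ι x.1, x.2) := by simp [mu]
    rw [h1, Op_mul_X, Op_mul_X, Derivation.leibniz, hg, smul_zero, zero_add, smul_eq_mul, mul_comm g]
    have h2 : pderiv (ι x.1, x.2) (mu n ι h) = mu n ι (pderiv x h) := by
      exact pderiv_rename hinj x h
    rw [h2, hp]

lemma mu_al (n : ℕ) {k k' : ℕ} (ι : Fin k → Fin k') (i j : Fin k) :
    mu n ι (al n k i j) = al n k' (ι i) (ι j) := by
  rw [al, al, map_mul, map_sum]
  congr 1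
  · simp [mu]
  · apply Finset.sum_congr rfl
    intro r _
    simp [mu]

lemma mu_embA (n : ℕ) {k k' : ℕ} (σ : Fin k' → Fin k) (i : Fin k') (f : Apol n) :
    mu n σ (embA n k' i f) = embA n k (σ i) f := by
  rw [mu, embA, embA, rename_rename]; rfl

lemma mu_const (n : ℕ) {k k' : ℕ} (σ : Fin k' → Fin k) (i : Fin k) (hσ : ∀ j, σ j = i) (h : Tens n k') :
    mu n σ h = embA n k i (aeval (fun v : Fin k' × Fin (2*n) => (X v.2 : Apol n)) h) := by
  have : mu n σ = (embA n k i).comp (aeval (fun v : Fin k' × Fin (2*n) => (X v.2 : Apol n))) := by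
    apply MvPolynomial.algHom_ext
    intro v
    simp [mu, embA, hσ]
  rw [this]; rfl

/-- Combinatorial data of a face. -/
structure FaceData (n : ℕ) {k k' : ℕ} (σ : Fin k' → Fin k) (x y : Fin k') (i0 : Fin k)
    (a : Fin k' → Apol n) (b : Fin k → Apol n) : Prop where
  hxy : x ≠ y
  hx : σ x = i0
  hy : σ y = i0
  hb0 : b i0 = moyal n (a x) (a y)
  hb : ∀ i, i ≠ x → i ≠ y → b (σ i) = a i
  hne : ∀ i, i ≠ x → i ≠ y → σ i ≠ i0
  hinj : ∀ i j, i ≠ x → i ≠ y → j ≠ x → j ≠ y → σ i = σ j → i = j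
  hsurj : ∀ j, j ≠ i0 → ∃ i, i ≠ x ∧ i ≠ y ∧ σ i = j

lemma pderiv_embA_ne (n k : ℕ) (i j : Fin k) (v : Fin (2*n)) (h : i ≠ j) (f : Apol n) :
    pderiv (i, v) (embA n k j f) = 0 := by
  apply pderiv_eq_zero_of_notMem_vars
  intro hm
  classical
  have := vars_rename (fun v => (j, v)) f hm
  simp at this
  exact h this.2.symm

lemma pderiv_prod_eq_zero {σ R ι : Type*} [CommRing R] (s : Finset ι) (f : ι → MvPolynomial σ R)
    (i : σ) (h : ∀ j ∈ s, pderiv i (f j) = 0) : pderiv i (∏ j ∈ s, f j) = 0 := by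
  classical
  induction s using Finset.induction_on with
  | empty => simp
  | insert a s ha ih =>
    rw [Finset.prod_insert ha, Derivation.leibniz, ih (fun j hj => h j (Finset.mem_insert_of_mem hj)),
      h a (Finset.mem_insert_self _ _)]
    simp

lemma elemT_face (n : ℕ) {k k' : ℕ} {σ : Fin k' → Fin k} {x y : Fin k'} {i0 : Fin k}
    {a : Fin k' → Apol n} {b : Fin k → Apol n} (F : FaceData n σ x y i0 a b) :
    ∃ M0, ∀ M, M0 ≤ M → elemT b = mu n σ (∑ m ∈ Finset.range (M+1),
      (algebraMap ℂ Kc ((m.factorial : ℂ)⁻¹) * eps ^ m) • Op n k' (al n k' x y ^ m) (elemT a)) := by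
  refine ⟨(elemT ![a x, a y]).totalDegree, fun M hM => ?_⟩
  classical
  set g : Tens n k' := ∏ i ∈ (Finset.univ.erase x).erase y, embA n k' i (a i) with hgdef
  set ι : Fin 2 → Fin k' := ![x, y] with hι
  have hιinj : Function.Injective ι := by
    intro s t
    fin_cases s <;> fin_cases t <;> simp [hι, F.hxy, F.hxy.symm]
  have hg : ∀ i v, pderiv (ι i, v) g = 0 := by
    intro i v
    apply pderiv_prod_eq_zero
    intro j hj
    simp only [Finset.mem_erase, Finset.mem_univ, and_true] at hj
    apply pderiv_embA_ne
    fin_cases i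
    · exact hj.2.symm
    · exact hj.1.symm
  have h1 : elemT a = mu n ι (elemT ![a x, a y]) * g := by
    have e1 : mu n ι (elemT ![a x, a y]) = embA n k' x (a x) * embA n k' y (a y) := by
      rw [elemT, Fin.prod_univ_two, map_mul, mu_embA, mu_embA]; rfl
    rw [e1, elemT, ← Finset.mul_prod_erase _ _ (Finset.mem_univ x),
      ← Finset.mul_prod_erase (Finset.univ.erase x) _
        (Finset.mem_erase.mpr ⟨F.hxy.symm, Finset.mem_univ y⟩), mul_assoc]
  have h2 : ∀ m, Op n k' (al n k' x y ^ m) (elemT a) =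
      mu n ι (Op n 2 (al n 2 0 1 ^ m) (elemT ![a x, a y])) * g := by
    intro m
    have e : al n k' x y ^ m = mu n ι (al n 2 0 1 ^ m) := by
      rw [map_pow, mu_al]; rfl
    rw [h1, e, Op_mu_mul n ι hιinj g hg]
  have h3 : mu n σ g = ∏ j ∈ Finset.univ.erase i0, embA n k j (b j) := by
    rw [hgdef, map_prod]
    refine Finset.prod_bij (fun i _ => σ i) ?_ ?_ ?_ ?_
    · intro i hi
      simp only [Finset.mem_erase, Finset.mem_univ, and_true] at hi ⊢
      exact F.hne i hi.2 hi.1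
    · intro i hi j hj hij
      simp only [Finset.mem_erase, Finset.mem_univ, and_true] at hi hj
      exact F.hinj i j hi.2 hi.1 hj.2 hj.1 hij
    · intro j hj
      simp only [Finset.mem_erase, Finset.mem_univ, and_true] at hj
      obtain ⟨i, h1, h2, h3⟩ := F.hsurj j hj
      exact ⟨i, by simp [h1, h2], h3⟩
    · intro i hi
      simp only [Finset.mem_erase, Finset.mem_univ, and_true] at hi
      rw [mu_embA, F.hb i hi.2 hi.1]
  rw [elemT, ← Finset.mul_prod_erase _ _ (Finset.mem_univ i0), ← h3, F.hb0,
    moyal_formula n _ _ M hM, map_sum, map_sum, Finset.sum_mul]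
  apply Finset.sum_congr rfl
  intro m _
  rw [h2, map_smul, map_smul, map_mul, smul_mul_assoc]
  congr 2
  have e : ∀ h, mu n σ (mu n ι h) = mu n (σ ∘ ι) h := by
    intro h; rw [mu, mu, mu, rename_rename]; rfl
  rw [e, mu_const n (σ ∘ ι) i0]
  intro j
  fin_cases j
  · exact F.hx
  · exact F.hy

lemma Lf_face (n : ℕ) {k k' : ℕ} {σ : Fin k' → Fin k} {x y : Fin k'} {i0 : Fin k}
    {a : Fin k' → Apol n} {b : Fin k → Apol n} (F : FaceData n σ x y i0 a b) :
    ∃ M0, ∀ M, M0 ≤ M → ∀ P, Lf n k (elemT b) P = ∑ m ∈ Finset.range (M+1),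
      (algebraMap ℂ Kc ((m.factorial : ℂ)⁻¹) * eps ^ m) *
        Lf n k' (elemT a) (de n σ P * al n k' x y ^ m) := by
  obtain ⟨M0, h⟩ := elemT_face n F
  refine ⟨M0, fun M hM P => ?_⟩
  rw [Lf_apply, h M hM, Op_mu, constantCoeff_mu, map_sum, map_sum]
  apply Finset.sum_congr rfl
  intro m _
  rw [map_smul, ← Op_mul, smul_eq_C_mul, map_mul, constantCoeff_C, Lf_apply]

lemma Tm_homog (n m : ℕ) : (Tm n m).IsHomogeneous (2*m+2*n) := by
  rw [Tm_eq]
  apply IsHomogeneous.sum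
  intro K hK
  rw [Finset.mem_piAntidiag] at hK
  refine (((isHomogeneous_C _ _).mul ((alK_homog n _ K).mul (pis_homog n)))).congr_deg ?_
  rw [← Finset.mul_sum]
  have : ∑ p, K p = m := hK.1
  rw [this]; omega

lemma de_homog (n : ℕ) {k k' : ℕ} (σ : Fin k' → Fin k) {P : Tens n k} {d : ℕ}
    (hP : P.IsHomogeneous d) : (de n σ P).IsHomogeneous d := by
  have := hP.aeval (n := 1) (fun x : Fin k × Fin (2*n) =>
    ∑ i' : Fin k', if σ i' = x.1 then (X (i', x.2) : Tens n k') else 0) (by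
      intro x
      apply IsHomogeneous.sum
      intro i _
      split_ifs
      · exact isHomogeneous_X _ _
      · exact isHomogeneous_zero _ _ _)
  exact this.congr_deg (one_mul d)

/-- The order `N` part of the symbol of a face. -/
def Fm (n : ℕ) (σ : Fin (2*n+2) → Fin (2*n+1)) (x y : Fin (2*n+2)) (N : ℕ) : Tens n (2*n+2) :=
  IntR (Tens n (2*n+2)) (2*n)
    ((map (de n σ : Tens n (2*n+1) →+* Tens n (2*n+2))
        (Qq n (2*n+1) (2*n) (fun i => We X i.1)) + C (al n (2*n+2) x y)) ^ N) * de n σ (pis n)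

lemma de_real (n : ℕ) {k k' : ℕ} (σ : Fin k' → Fin k) (r : ℝ) :
    (de n σ : Tens n k →+* Tens n k') (algebraMap ℝ _ r) = algebraMap ℝ _ r := by
  rw [IsScalarTower.algebraMap_apply ℝ Kc (Tens n k), IsScalarTower.algebraMap_apply ℝ Kc (Tens n k')]
  exact AlgHom.commutes (de n σ) _

lemma Fm_eq (n : ℕ) (σ : Fin (2*n+2) → Fin (2*n+1)) (x y : Fin (2*n+2)) (N : ℕ) :
    Fm n σ x y N = ∑ p ∈ Finset.HasAntidiagonal.antidiagonal N,
      C (N.choose p.1 : Kc) * (de n σ (Tm n p.1) * al n (2*n+2) x y ^ p.2) := by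
  rw [Fm, (Commute.all _ _).add_pow', map_sum, Finset.sum_mul]
  apply Finset.sum_congr rfl
  intro p _
  rw [Tm, map_mul, ← AlgHom.coe_toRingHom (de n σ), IntR_hom _ (de_real n σ), map_pow]
  have : (N.choose p.1) • (map (de n σ : Tens n (2*n+1) →+* Tens n (2*n+2))
        (Qq n (2*n+1) (2*n) (fun i => We X i.1)) ^ p.1 * C (al n (2*n+2) x y) ^ p.2) =
      C ((N.choose p.1 : Tens n (2*n+2)) * al n (2*n+2) x y ^ p.2) *
      map (de n σ : Tens n (2*n+1) →+* Tens n (2*n+2))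
        (Qq n (2*n+1) (2*n) (fun i => We X i.1)) ^ p.1 := by
    rw [nsmul_eq_mul, map_mul, map_natCast, map_pow]; ring
  rw [this, IntR_C_mul, map_natCast]
  ring

lemma tau_face (n : ℕ) {σ : Fin (2*n+2) → Fin (2*n+1)} {x y : Fin (2*n+2)} {i0 : Fin (2*n+1)}
    {a : Fin (2*n+2) → Apol n} {b : Fin (2*n+1) → Apol n} (F : FaceData n σ x y i0 a b) :
    ∃ M0, ∀ M, M0 ≤ M → tau n (elemT b) = ∑ N ∈ Finset.range (M+1),
      (algebraMap ℂ Kc ((N.factorial : ℂ)⁻¹) * eps ^ N) *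
        Lf n (2*n+2) (elemT a) (Fm n σ x y N) := by
  obtain ⟨M0, hM0⟩ := Lf_face n F
  refine ⟨max M0 (max (elemT b).totalDegree (elemT a).totalDegree), fun M hM => ?_⟩
  simp only [max_le_iff] at hM
  obtain ⟨h0, hb, ha⟩ := hM
  rw [tau_formula n M _ hb]
  set G : ℕ × ℕ → Kc := fun p => (algebraMap ℂ Kc ((p.1.factorial : ℂ)⁻¹ * (p.2.factorial : ℂ)⁻¹) *
    eps ^ (p.1 + p.2)) * Lf n (2*n+2) (elemT a) (de n σ (Tm n p.1) * al n (2*n+2) x y ^ p.2) with hG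
  have hG0 : ∀ p, M < p.1 + p.2 → G p = 0 := by
    intro p hp
    simp only [hG]
    rw [Lf_eq_zero n (2*n+2) ((de_homog n σ (Tm_homog n p.1)).mul ((al_homog n _ x y).pow p.2)),
      mul_zero]
    omega
  have h1 : ∀ m, (algebraMap ℂ Kc ((m.factorial : ℂ)⁻¹) * eps ^ m) *
      Lf n (2*n+1) (elemT b) (Tm n m) = ∑ m' ∈ Finset.range (M+1), G (m, m') := by
    intro m
    rw [hM0 M h0, Finset.mul_sum]
    apply Finset.sum_congr rfl
    intro m' _
    simp only [hG, map_mul, pow_add]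
    ring
  have h2 : ∀ N, (algebraMap ℂ Kc ((N.factorial : ℂ)⁻¹) * eps ^ N) *
        Lf n (2*n+2) (elemT a) (Fm n σ x y N) = ∑ p ∈ Finset.HasAntidiagonal.antidiagonal N, G p := by
    intro N
    rw [Fm_eq, map_sum, Finset.mul_sum]
    apply Finset.sum_congr rfl
    intro p hp
    rw [Finset.HasAntidiagonal.mem_antidiagonal] at hp
    rw [Lf_C_mul]
    simp only [hG]
    have h3 : ((p.1.factorial : ℂ)⁻¹ * (p.2.factorial : ℂ)⁻¹) =
        ((N.factorial : ℂ)⁻¹) * (N.choose p.1 : ℂ) := by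
      have := Nat.add_choose_mul_factorial_mul_factorial p.1 p.2
      rw [← Nat.choose_symm_add, hp] at this
      have h4 : (N.choose p.1 : ℂ) * (p.1.factorial : ℂ) * (p.2.factorial : ℂ) = (N.factorial : ℂ) := by
        exact_mod_cast this
      have e1 : (p.1.factorial : ℂ) ≠ 0 := by exact_mod_cast Nat.factorial_ne_zero _
      have e2 : (p.2.factorial : ℂ) ≠ 0 := by exact_mod_cast Nat.factorial_ne_zero _
      have e3 : (N.factorial : ℂ) ≠ 0 := by exact_mod_cast Nat.factorial_ne_zero _
      field_simp
      rw [← h4]; ring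
    rw [h3, hp, map_mul (algebraMap ℂ Kc), map_natCast (algebraMap ℂ Kc)]
    ring
  rw [Finset.sum_congr rfl (fun m _ => h1 m), Finset.sum_congr rfl (fun m _ => h2 m),
    ← Finset.sum_product', ← Finset.sum_biUnion]
  · apply Finset.sum_congr_of_eq_on_inter
    · intro p _ hp'
      apply hG0
      simp only [Finset.mem_biUnion, Finset.mem_range, Finset.HasAntidiagonal.mem_antidiagonal,
        not_exists, not_and] at hp'
      by_contra h
      exact hp' (p.1 + p.2) (by omega) rfl
    · intro p hp hp'
      simp only [Finset.mem_biUnion, Finset.mem_range,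
        Finset.HasAntidiagonal.mem_antidiagonal] at hp
      obtain ⟨N, hN, hpN⟩ := hp
      simp only [Finset.mem_product, Finset.mem_range] at hp'
      omega
    · intro _ _ _; rfl
  · intro a _ c _ hac
    apply Finset.disjoint_left.mpr
    intro p h1 h2
    rw [Finset.HasAntidiagonal.mem_antidiagonal] at h1 h2
    exact hac (h1.symm.trans h2)

lemma sum_pairs_symm {B : Type*} [CommRing B] (k : ℕ) (G : Fin k → Fin k → B)
    (hs : ∀ i j, G i j = G j i) (h0 : ∀ i, G i i = 0) :
    ∑ i, ∑ j, G i j = 2 * ∑ p : Pairs k, G p.1.1 p.1.2 := by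
  classical
  have h1 : ∑ p : Pairs k, G p.1.1 p.1.2 = ∑ i, ∑ j, if i < j then G i j else 0 := by
    rw [← Fintype.sum_prod_type', ← Finset.sum_filter]
    exact (Finset.sum_subtype (Finset.univ.filter fun p : Fin k × Fin k => p.1 < p.2)
      (by simp) (fun p : Fin k × Fin k => G p.1 p.2)).symm
  have h2 : ∑ i, ∑ j, (if i < j then G i j else 0) = ∑ i, ∑ j, if j < i then G i j else 0 := by
    rw [Finset.sum_comm]
    exact Finset.sum_congr rfl fun i _ => Finset.sum_congr rfl fun j _ => by rw [hs]
  rw [h1, two_mul]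
  nth_rw 2 [h2]
  rw [← Finset.sum_add_distrib]
  refine Finset.sum_congr rfl fun i _ => ?_
  rw [← Finset.sum_add_distrib]
  refine Finset.sum_congr rfl fun j _ => ?_
  rcases lt_trichotomy i j with h | h | h
  · simp [h, h.not_gt]
  · subst h; simp [h0]
  · simp [h, h.not_gt]

lemma sum_split3 {B : Type*} [CommRing B] (k : ℕ) (c p q A : Fin k → Fin k → B) :
    ∑ i, ∑ j, (c i j + p i j - q i j) * A i j =
      ∑ i, ∑ j, c i j * A i j + ∑ i, ∑ j, p i j * A i j - ∑ i, ∑ j, q i j * A i j := by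
  simp only [sub_mul, add_mul, Finset.sum_sub_distrib, Finset.sum_add_distrib]

/-- antisymmetric coefficients of the exponent. -/
def cS {B : Type*} [CommRing B] {k : ℕ} (u : Fin k → B) (i j : Fin k) : B :=
  2 * u i - 2 * u j + (if i < j then 1 else if j < i then -1 else 0)

lemma al_self (n k : ℕ) (i : Fin k) : al n k i i = 0 := by
  rw [al, Finset.sum_eq_zero, mul_zero]
  intro r _
  exact sub_eq_zero.mpr (mul_comm _ _)

lemma two_Q_gen {B : Type*} [CommRing B] (k : ℕ) (u : Fin k → B) (A : Fin k → Fin k → B)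
    (hA : ∀ i j, A j i = - A i j) (hA0 : ∀ i, A i i = 0) :
    2 * (∑ p : Pairs k, (2 * u p.1.1 - 2 * u p.1.2 + 1) * A p.1.1 p.1.2) =
      ∑ i, ∑ j, cS u i j * A i j := by
  rw [sum_pairs_symm k (fun i j => cS u i j * A i j)]
  · congr 1
    refine Finset.sum_congr rfl fun p _ => ?_
    have := p.2
    rw [cS, if_pos this]
  · intro i j
    rw [hA i j]
    have : cS u i j = - cS u j i := by
      unfold cS
      rcases lt_trichotomy i j with h | h | h
      · simp only [h, h.not_gt, if_true, if_false]; ring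
      · subst h; simp
      · simp only [h, h.not_gt, if_true, if_false]; ring
    rw [this]; ring
  · intro i
    rw [hA0, mul_zero]

lemma two_Qq (n k d : ℕ) (u : Fin k → MvPolynomial (Fin d) (Tens n k)) :
    2 * Qq n k d u = ∑ i, ∑ j, cS u i j * C (al n k i j) :=
  two_Q_gen k u (fun i j => C (al n k i j))
    (fun i j => by rw [al_swap, map_neg]) (fun i => by rw [al_self, map_zero])

lemma de_al (n : ℕ) {k k' : ℕ} (σ : Fin k' → Fin k) (a b : Fin k) :
    de n σ (al n k a b) = ∑ i, ∑ j, if σ i = a ∧ σ j = b then al n k' i j else 0 := by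
  have h1 : ∀ i j, (if σ i = a ∧ σ j = b then al n k' i j else 0) =
      C (algebraMap ℂ Kc (1/2)) * ∑ r : Fin n,
        ((if σ i = a then X (i, pVar n r) else 0) * (if σ j = b then X (j, qVar n r) else 0)
        - (if σ i = a then X (i, qVar n r) else 0) * (if σ j = b then X (j, pVar n r) else 0)) := by
    intro i j
    by_cases ha : σ i = a <;> by_cases hb : σ j = b <;> simp [ha, hb, al]
  simp only [h1, ← Finset.mul_sum]
  have h2 : ∀ F : Fin k' → Fin k' → Fin n → Tens n k', ∑ i, ∑ j, ∑ r, F i j r = ∑ r, ∑ i, ∑ j, F i j r := by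
    intro F
    rw [Finset.sum_comm' (t' := Finset.univ) (s' := fun _ => Finset.univ) (by simp)]
    rw [Finset.sum_comm]
    rw [Finset.sum_comm]
    have : ∀ i, ∑ j, ∑ r, F i j r = ∑ r, ∑ j, F i j r := fun i => Finset.sum_comm
    rw [Finset.sum_comm]
    simp only [this]
    rw [Finset.sum_comm]
  rw [h2, al, map_mul, map_sum]
  congr 1
  · rw [de, aeval_C]; rfl
  · refine Finset.sum_congr rfl fun r _ => ?_
    simp only [Finset.sum_sub_distrib]
    rw [map_sub, map_mul, map_mul]
    simp only [de, aeval_X, Finset.sum_mul_sum]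

lemma eq_of_two_mul {n k d : ℕ} {a b : MvPolynomial (Fin d) (Tens n k)} (h : 2 * a = 2 * b) : a = b := by
  have h2 : (C (C (algebraMap ℂ Kc (1/2))) : MvPolynomial (Fin d) (Tens n k)) * 2 = 1 := by
    have : (2 : MvPolynomial (Fin d) (Tens n k)) = C (C (algebraMap ℂ Kc 2)) := by
      rw [map_ofNat (algebraMap ℂ Kc), map_ofNat (C : Kc →+* Tens n k),
        map_ofNat (C : Tens n k →+* MvPolynomial (Fin d) (Tens n k))]
    rw [this, ← map_mul, ← map_mul, ← map_mul]
    norm_num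
  rw [← one_mul a, ← one_mul b, ← h2, mul_assoc, h, mul_assoc]

lemma exponent_face (n : ℕ) {k k' d : ℕ} (σ : Fin k' → Fin k) (x y : Fin k')
    (u : Fin k → MvPolynomial (Fin d) (Tens n k)) (U : Fin k' → MvPolynomial (Fin d) (Tens n k'))
    (hc : ∀ i j, cS U i j = cS (fun a => map (de n σ : Tens n k →+* Tens n k') (u a)) (σ i) (σ j)
      + (if i = x ∧ j = y then 1 else 0) - (if i = y ∧ j = x then 1 else 0)) :
    map (de n σ : Tens n k →+* Tens n k') (Qq n k d u) + C (al n k' x y) = Qq n k' d U := by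
  apply eq_of_two_mul
  set V := fun a => map (de n σ : Tens n k →+* Tens n k') (u a) with hV
  have h1 : 2 * map (de n σ : Tens n k →+* Tens n k') (Qq n k d u) =
      ∑ a, ∑ b, cS V a b * C (de n σ (al n k a b)) := by
    have : (2 : MvPolynomial (Fin d) (Tens n k')) = map (de n σ : Tens n k →+* Tens n k') 2 := by simp
    rw [this, ← map_mul, two_Qq, map_sum]
    refine Finset.sum_congr rfl fun a _ => ?_
    rw [map_sum]
    refine Finset.sum_congr rfl fun b _ => ?_
    rw [map_mul, map_C]
    congr 1
    simp only [cS, hV]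
    split_ifs <;> simp
  have h2 : ∑ a, ∑ b, cS V a b * C (de n σ (al n k a b)) =
      ∑ i, ∑ j, cS V (σ i) (σ j) * C (al n k' i j) := by
    simp only [de_al, map_sum, Finset.mul_sum]
    have e1 : ∀ a b i j, cS V a b * C (if σ i = a ∧ σ j = b then al n k' i j else 0) =
        if σ j = b then (if σ i = a then cS V a b * C (al n k' i j) else 0) else 0 := by
      intro a b i j
      by_cases h : σ i = a <;> by_cases h' : σ j = b <;> simp [h, h']
    simp only [e1]
    have e2 : ∀ a, ∑ b, ∑ i, ∑ j, (if σ j = b then (if σ i = a then cS V a b * C (al n k' i j) else 0) else 0)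
        = ∑ i, ∑ j, (if σ i = a then cS V a (σ j) * C (al n k' i j) else 0) := by
      intro a
      rw [Finset.sum_comm]
      refine Finset.sum_congr rfl fun i _ => ?_
      rw [Finset.sum_comm]
      refine Finset.sum_congr rfl fun j _ => ?_
      rw [Finset.sum_ite_eq, if_pos (Finset.mem_univ _)]
    simp only [e2]
    rw [Finset.sum_comm]
    refine Finset.sum_congr rfl fun i _ => ?_
    rw [Finset.sum_comm]
    refine Finset.sum_congr rfl fun j _ => ?_
    rw [Finset.sum_ite_eq, if_pos (Finset.mem_univ _)]
  have h3 : ∀ s t : Fin k', ∑ i, ∑ j, (if i = s ∧ j = t then (1 : MvPolynomial (Fin d) (Tens n k')) else 0) *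
      C (al n k' i j) = C (al n k' s t) := by
    intro s t
    rw [Finset.sum_eq_single s, Finset.sum_eq_single t]
    · simp
    · intro b _ hb; simp [hb]
    · simp
    · intro b _ hb; simp [hb]
    · simp
  rw [mul_add, h1, h2, two_Qq]
  simp only [hc]
  refine Eq.trans ?_ (sum_split3 k' (fun i j => cS V (σ i) (σ j)) (fun i j => if i = x ∧ j = y then 1 else 0)
    (fun i j => if i = y ∧ j = x then 1 else 0) (fun i j => C (al n k' i j))).symm
  rw [h3, h3, al_swap n k' x y, map_neg]
  ring

/-- The face map. -/
def sg (d e : ℕ) (i : Fin (d+2)) : Fin (d+1) :=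
  ⟨if i.1 ≤ e then (if i.1 < d+1 then i.1 else 0) else i.1 - 1, by
    have := i.2; split_ifs <;> omega⟩

lemma sg_val (d e : ℕ) (i : Fin (d+2)) : (sg d e i).1 =
    if i.1 ≤ e then (if i.1 < d+1 then i.1 else 0) else i.1 - 1 := rfl

/-- second index of the multiplied pair. -/
def ys (d : ℕ) (e : Fin (d+2)) : Fin (d+2) :=
  if h : e.1 < d+1 then ⟨e.1+1, by omega⟩ else 0

lemma ys_val (d : ℕ) (e : Fin (d+2)) : (ys d e).1 = if e.1 < d+1 then e.1+1 else 0 := by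
  unfold ys; split_ifs <;> rfl

lemma We_zero' {B : Type*} [CommRing B] {d : ℕ} (w : Fin d → B) : We w 0 = 0 := by simp [We]
lemma We_last' {B : Type*} [CommRing B] {d : ℕ} (w : Fin d → B) : We w (d+1) = 1 := by simp [We]

lemma cS_face {B : Type*} [CommRing B] {d : ℕ} (w : Fin d → B) (e i j : Fin (d+2)) :
    cS (fun i : Fin (d+2) => We w (if i.1 ≤ e.1 then i.1 else i.1 - 1)) i j =
      cS (fun a : Fin (d+1) => We w a.1) (sg d e i) (sg d e j)
        + (if i = e ∧ j = ys d e then 1 else 0) - (if i = ys d e ∧ j = e then 1 else 0) := by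
  obtain ⟨i, hi⟩ := i
  obtain ⟨j, hj⟩ := j
  obtain ⟨e, he⟩ := e
  simp only [cS, Fin.lt_def, Fin.ext_iff, sg_val, ys_val]
  by_cases h : e < d + 1
  · have h1 : ∀ t, t < d+2 → (if t ≤ e then (if t < d+1 then t else 0) else t - 1) =
        if t ≤ e then t else t - 1 := by
      intro t ht; split_ifs <;> omega
    rw [h1 i hi, h1 j hj, if_pos h]
    have h2 : ((if i < j then 1 else if j < i then -1 else 0 : B)) =
       (if (if i ≤ e then i else i - 1) < (if j ≤ e then j else j - 1) then 1
        else if (if j ≤ e then j else j - 1) < (if i ≤ e then i else i - 1) then -1 else 0)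
       + (if i = e ∧ j = e + 1 then 1 else 0) - (if i = e + 1 ∧ j = e then 1 else 0) := by
      by_cases a1 : i = e ∧ j = e+1
      · obtain ⟨rfl, rfl⟩ := a1
        simp
      by_cases a2 : i = e + 1 ∧ j = e
      · obtain ⟨rfl, rfl⟩ := a2
        simp
      rw [if_neg a1, if_neg a2, add_zero, sub_zero]
      have b1 : (if i ≤ e then i else i - 1) < (if j ≤ e then j else j - 1) ↔ i < j := by
        split_ifs <;> omega
      have b2 : (if j ≤ e then j else j - 1) < (if i ≤ e then i else i - 1) ↔ j < i := by
        split_ifs <;> omega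
      simp only [b1, b2]
    rw [h2]; ring
  · have he' : e = d + 1 := by omega
    subst he'
    have hi' : i ≤ d + 1 := by omega
    have hj' : j ≤ d + 1 := by omega
    simp only [hi', hj', if_true, lt_irrefl, if_false]
    by_cases a : i < d+1 <;> by_cases b : j < d+1
    · have c1 : i ≠ d+1 := by omega
      have c2 : j ≠ d+1 := by omega
      simp [a, b, c1, c2]
    · have c1 : i ≠ d+1 := by omega
      have c2 : j = d+1 := by omega
      subst c2
      have c3 : ¬ (d + 1 < i) := by omega
      simp only [a, c1, c3, We_zero', We_last', if_true, lt_irrefl, if_false, false_and, not_lt_zero]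
      rcases Nat.eq_zero_or_pos i with h0 | h0
      · subst h0; simp [We_zero']; ring
      · simp [h0, h0.ne']; ring
    · have c1 : i = d+1 := by omega
      have c2 : j ≠ d+1 := by omega
      subst c1
      have c3 : ¬ (d + 1 < j) := by omega
      simp only [b, c2, c3, We_zero', We_last', if_true, lt_irrefl, if_false, and_false, not_lt_zero]
      rcases Nat.eq_zero_or_pos j with h0 | h0
      · subst h0; simp [We_zero']; ring
      · simp [h0, h0.ne']; ring
    · have c1 : i = d+1 := by omega
      have c2 : j = d+1 := by omega
      subst c1; subst c2
      simp

lemma aeval_dup_We {R : Type*} [CommRing R] (d e i : ℕ) (hi : i < d + 2) :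
    aeval (dupV (X : Fin d → MvPolynomial (Fin d) R) e)
      (We (X : Fin (d+1) → MvPolynomial (Fin (d+1)) R) i) =
    We X (if i ≤ e then i else i - 1) := by
  rcases Nat.eq_zero_or_pos i with h | h
  · subst h; simp [We]
  · obtain ⟨t, rfl⟩ : ∃ t, i = t + 1 := ⟨i - 1, by omega⟩
    have ht : t < d + 1 := by omega
    have := We_succ (X : Fin (d+1) → MvPolynomial (Fin (d+1)) R) ⟨t, ht⟩
    simp only at this
    rw [this, aeval_X, dupV]
    simp

lemma aeval_Qq (n k d d' : ℕ) (v : Fin d → MvPolynomial (Fin d') (Tens n k))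
    (u : Fin k → MvPolynomial (Fin d) (Tens n k)) :
    aeval v (Qq n k d u) = Qq n k d' (fun i => aeval v (u i)) := by
  rw [Qq, Qq, map_sum]
  refine Finset.sum_congr rfl fun p _ => ?_
  rw [map_mul, map_add, map_sub, map_mul, map_mul, map_ofNat, map_one, aeval_C]
  rfl

/-- full exponent -/
abbrev QQ (n : ℕ) : MvPolynomial (Fin (2*n+1)) (Tens n (2*n+2)) :=
  Qq n (2*n+2) (2*n+1) (fun i => We X i.1)

lemma exponent_eq (n : ℕ) (e : Fin (2*n+2)) :
    map (de n (sg (2*n) e) : Tens n (2*n+1) →+* Tens n (2*n+2))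
        (Qq n (2*n+1) (2*n) (fun i => We X i.1)) + C (al n (2*n+2) e (ys (2*n) e)) =
      aeval (dupV X e.1) (QQ n) := by
  rw [aeval_Qq]
  apply exponent_face
  intro i j
  simp only [map_We]
  rw [← cS_face]
  congr 1
  funext i
  exact aeval_dup_We (2*n) e.1 i.1 i.2

/-- rows -/
def fX (n i : ℕ) (v : Fin (2*n)) : Tens n (2*n+2) := if h : i < 2*n+2 then X (⟨i, h⟩, v) else 0

/-- minors -/
def Dk {R : Type*} [CommRing R] (d : ℕ) (f : ℕ → Fin d → R) (k : ℕ) : R :=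
  Matrix.det (Matrix.of fun m v : Fin d => if m.1 < k then f (m.1+1) v else f (m.1+2) v)

lemma det_rows {R : Type*} [CommRing R] (d : ℕ) (f : ℕ → Fin d → R) (e : ℕ) (he : e ≤ d + 1) :
    Matrix.det (Matrix.of fun m v : Fin d => if m.1 + 1 < e then f (m.1+1) v else
      if m.1 + 1 = e then f (m.1+1) v + f (m.1+2) v else f (m.1+2) v) =
    (if 1 ≤ e then Dk d f (e-1) else 0) + (if e ≤ d then Dk d f e else 0) := by
  rcases Nat.eq_zero_or_pos e with h | h
  · subst h
    simp [Dk]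
  replace h : 1 ≤ e := h
  rcases Nat.lt_or_ge d e with h' | h'
  · have : e = d + 1 := by omega
    subst this
    rw [if_pos h, if_neg (by omega), add_zero, Dk]
    congr 1
    ext m v
    have := m.2
    simp
  rw [if_pos h, if_pos h']
  obtain ⟨t, rfl⟩ : ∃ t, e = t + 1 := ⟨e - 1, by omega⟩
  have e0 : (Matrix.of fun m v : Fin d => if m.1 + 1 < t + 1 then f (m.1+1) v else
      if m.1 + 1 = t + 1 then f (m.1+1) v + f (m.1+2) v else f (m.1+2) v) =
      Matrix.updateRow (Matrix.of fun m v : Fin d => if m.1 < t then f (m.1+1) v else f (m.1+2) v)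
        ⟨t, h'⟩ (f (t+2) + f (t+1)) := by
    ext m v
    rw [Matrix.updateRow_apply]
    by_cases hm : m = ⟨t, h'⟩
    · subst hm; simp [add_comm]
    · have : m.1 ≠ t := fun hh => hm (Fin.ext hh)
      simp [hm, this]
  rw [e0, Matrix.det_updateRow_add, Dk, Dk]
  congr 2
  · ext m v
    rw [Matrix.updateRow_apply]
    by_cases hm : m = ⟨t, h'⟩
    · subst hm; simp
    · simp [hm]
  · ext m v
    rw [Matrix.updateRow_apply]
    by_cases hm : m = ⟨t, h'⟩
    · subst hm; simp
    · have : m.1 ≠ t := fun hh => hm (Fin.ext hh)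
      have h3 : m.1 ≤ t ↔ m.1 < t := by omega
      simp [hm, h3]

lemma laplace_zero {R : Type*} [CommRing R] (d : ℕ) (f : ℕ → Fin d → R) (v : Fin d) :
    ∑ k : Fin (d+1), (-1)^k.1 * (Dk d f k.1 * f (k.1+1) v) = 0 := by
  have h0 : Matrix.det (Matrix.of fun i j : Fin (d+1) => f (i.1+1) ((Fin.cons v id : Fin (d+1) → Fin d) j)) = 0 := by
    apply Matrix.det_zero_of_column_eq (i := 0) (j := v.succ) (Fin.succ_ne_zero v).symm
    intro i
    simp
  rw [Matrix.det_succ_column_zero] at h0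
  rw [← h0]
  refine Finset.sum_congr rfl fun k _ => ?_
  rw [mul_assoc, mul_comm (Dk d f k.1), Dk]
  congr 3
  ext m w
  simp only [Matrix.of_apply, Matrix.submatrix_apply, Fin.cons_succ, id]
  by_cases h : m.1 < k.1
  · rw [if_pos h, Fin.succAbove_of_castSucc_lt _ _ (by simpa [Fin.lt_def] using h)]; rfl
  · rw [if_neg h, Fin.succAbove_of_le_castSucc _ _ (by simpa [Fin.le_def] using h)]; rfl

lemma telescope {R : Type*} [CommRing R] (d : ℕ) (A D : ℕ → R) :
    ∑ e ∈ Finset.range (d+2), (-1)^e * (A e * ((if 1 ≤ e then D (e-1) else 0) + (if e ≤ d then D e else 0)))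
      = - ∑ k ∈ Finset.range (d+1), (-1)^k * (D k * (A (k+1) - A k)) := by
  have h1 : ∀ e, (-1 : R)^e * (A e * ((if 1 ≤ e then D (e-1) else 0) + (if e ≤ d then D e else 0)))
     = (-1 : R)^e * (A e * (if 1 ≤ e then D (e-1) else 0)) + (-1 : R)^e * (A e * (if e ≤ d then D e else 0)) :=
    fun e => by ring
  simp only [h1, Finset.sum_add_distrib]
  rw [Finset.sum_range_succ', Finset.sum_range_succ (fun e => (-1 : R)^e * (A e * (if e ≤ d then D e else 0)))]
  rw [if_neg (by omega : ¬ (d + 1 ≤ d))]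
  simp only [if_false, mul_zero, add_zero, Nat.zero_lt_one.not_ge]
  rw [← Finset.sum_add_distrib, ← Finset.sum_neg_distrib]
  refine Finset.sum_congr rfl fun k hk => ?_
  rw [Finset.mem_range] at hk
  rw [if_pos (by omega), if_pos (by omega), Nat.add_sub_cancel, pow_succ]
  ring

lemma de_pis (n : ℕ) (e : Fin (2*n+2)) :
    de n (sg (2*n) e) (pis n) = (if 1 ≤ e.1 then Dk (2*n) (fX n) (e.1-1) else 0)
      + (if e.1 ≤ 2*n then Dk (2*n) (fX n) e.1 else 0) := by
  rw [← det_rows (2*n) (fX n) e.1 (by have := e.2; omega), pis, AlgHom.map_det]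
  congr 1
  ext1 m v
  simp only [AlgHom.mapMatrix_apply, Matrix.map_apply, Matrix.of_apply, de, aeval_X, fX]
  have hm := m.2
  have he := e.2
  rw [dif_pos (by omega), dif_pos (by omega)]
  have key : ∀ i : Fin (2*n+2), sg (2*n) e.1 i = m.succ ↔
      (i.1 = m.1+1 ∧ m.1 + 1 ≤ e.1) ∨ (i.1 = m.1 + 2 ∧ e.1 ≤ m.1 + 1) := by
    intro i
    have := i.2
    rw [Fin.ext_iff, sg_val, Fin.val_succ]
    split_ifs <;> first | omega | (rw [false_iff]; omega)
  simp only [key]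
  split_ifs with h1 h2
  · rw [Finset.sum_eq_single ⟨m.1+1, by omega⟩]
    · rw [if_pos (Or.inl ⟨rfl, h1.le⟩)]
    · intro b _ hb
      rw [if_neg]
      intro h
      apply hb
      apply Fin.ext
      simp only
      omega
    · simp
  · have h3 : (⟨m.1+1, by omega⟩ : Fin (2*n+2)) ≠ ⟨m.1+2, by omega⟩ := by
      rw [ne_eq, Fin.ext_iff]; simp
    rw [← Finset.sum_subset (Finset.subset_univ {(⟨m.1+1, by omega⟩ : Fin (2*n+2)), ⟨m.1+2, by omega⟩}),
      Finset.sum_pair h3]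
    · rw [if_pos (Or.inl ⟨rfl, h2.le⟩), if_pos (Or.inr ⟨rfl, h2.ge⟩)]
    · intro b _ hb
      simp only [Finset.mem_insert, Finset.mem_singleton, Fin.ext_iff, not_or] at hb
      rw [if_neg]
      omega
  · rw [Finset.sum_eq_single ⟨m.1+2, by omega⟩]
    · rw [if_pos (Or.inr ⟨rfl, by omega⟩)]
    · intro b _ hb
      rw [if_neg]
      intro h
      apply hb
      apply Fin.ext
      simp only
      omega
    · simp

lemma pderiv_We {R : Type*} [CommRing R] (d : ℕ) (k : Fin (d+1)) (i : Fin (d+2)) :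
    pderiv k (We (X : Fin (d+1) → MvPolynomial (Fin (d+1)) R) i.1) =
      if i = k.succ then 1 else 0 := by
  classical
  refine Fin.cases ?_ (fun j => ?_) i
  · rw [Fin.val_zero, We_zero', map_zero, if_neg (Fin.succ_ne_zero k).symm]
  · rw [Fin.val_succ, We_succ, pderiv_X, Pi.single_apply]
    simp only [Fin.succ_inj, eq_comm]

lemma pd_gen {R : Type*} [CommRing R] {d m : ℕ} (k : Fin d) (s : Fin m)
    (u : Fin m → MvPolynomial (Fin d) R) (A : Fin m → Fin m → R)
    (hu : ∀ i, pderiv k (u i) = if i = s then 1 else 0) (hA : ∀ i j, A j i = - A i j) :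
    pderiv k (∑ i, ∑ j, cS u i j * C (A i j)) = C (4 * ∑ j, A s j) := by
  have h1 : ∀ i j, pderiv k (cS u i j * C (A i j)) =
      (if i = s then C (2 * A s j) else 0) - (if j = s then C (2 * A i s) else 0) := by
    intro i j
    have h2 : pderiv k (cS u i j) = 2 * (if i = s then 1 else 0) - 2 * (if j = s then 1 else 0) := by
      have e2 : ∀ q : MvPolynomial (Fin d) R, pderiv k (2 * q) = 2 * pderiv k q := by
        intro q; rw [two_mul, two_mul, map_add]
      unfold cS
      rw [map_add, map_sub, e2, e2, hu, hu]
      have : pderiv k (if i < j then 1 else if j < i then -1 else 0 : MvPolynomial (Fin d) R) = 0 := by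
        split_ifs <;> simp
      rw [this, add_zero]
    rw [Derivation.leibniz, pderiv_C, smul_zero, zero_add, smul_eq_mul, h2]
    have e3 : ∀ q : R, (C (2 * q) : MvPolynomial (Fin d) R) = 2 * C q := by
      intro q; rw [two_mul, two_mul, map_add]
    rw [e3, e3]
    split_ifs with a b b
    · subst a; subst b; ring
    · subst a; ring
    · subst b; ring
    · ring
  simp only [map_sum, h1, Finset.sum_sub_distrib]
  have h3 : ∑ i, ∑ j, (if i = s then C (2 * A s j) else 0 : MvPolynomial (Fin d) R) = ∑ j, C (2 * A s j) := by
    rw [Finset.sum_comm]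
    simp
  have h4 : ∑ i, ∑ j, (if j = s then C (2 * A i s) else 0 : MvPolynomial (Fin d) R) = ∑ j, C (2 * A j s) := by
    simp
  rw [h3, h4, ← Finset.sum_sub_distrib, Finset.mul_sum, map_sum]
  refine Finset.sum_congr rfl fun j _ => ?_
  rw [hA s j, ← map_sub]
  congr 1
  ring

lemma pderiv_two_mul {R : Type*} [CommRing R] {d : ℕ} (k : Fin d) (Q : MvPolynomial (Fin d) R) :
    pderiv k (2 * Q) = 2 * pderiv k Q := by
  rw [two_mul, two_mul, map_add]

lemma pderiv_QQ (n : ℕ) (k : Fin (2*n+1)) :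
    2 * pderiv k (QQ n) = C (4 * ∑ j, al n (2*n+2) k.succ j) := by
  refine (pderiv_two_mul k (QQ n)).symm.trans ?_
  rw [two_Qq]
  exact pd_gen k k.succ _ (fun i j => al n (2*n+2) i j) (fun i => pderiv_We (2*n) k i)
    (fun i j => al_swap n (2*n+2) i j)

lemma sum_al_zero (n : ℕ) (j : Fin (2*n+2)) :
    ∑ k : Fin (2*n+1), (-1)^k.1 * (Dk (2*n) (fX n) k.1 * al n (2*n+2) k.succ j) = 0 := by
  have hf : ∀ (k : Fin (2*n+1)) v, (X (k.succ, v) : Tens n (2*n+2)) = fX n (k.1+1) v := by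
    intro k v
    rw [fX, dif_pos (by have := k.2; omega)]; rfl
  have h1 : ∀ k : Fin (2*n+1), (-1)^k.1 * (Dk (2*n) (fX n) k.1 * al n (2*n+2) k.succ j) =
      C (algebraMap ℂ Kc (1/2)) * ∑ r : Fin n,
        (((-1)^k.1 * (Dk (2*n) (fX n) k.1 * fX n (k.1+1) (pVar n r))) * X (j, qVar n r)
        - ((-1)^k.1 * (Dk (2*n) (fX n) k.1 * fX n (k.1+1) (qVar n r))) * X (j, pVar n r)) := by
    intro k
    rw [al, Finset.mul_sum, Finset.mul_sum, Finset.mul_sum, Finset.mul_sum]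
    refine Finset.sum_congr rfl fun r _ => ?_
    rw [hf, hf]
    ring
  rw [Finset.sum_congr rfl fun k _ => h1 k, ← Finset.mul_sum, Finset.sum_comm, Finset.sum_eq_zero, mul_zero]
  intro r _
  rw [Finset.sum_sub_distrib, ← Finset.sum_mul, ← Finset.sum_mul, laplace_zero, laplace_zero]
  simp

lemma sum_pderiv_gen {R : Type*} [CommRing R] {d m : ℕ} (D : ℕ → R) (Q : MvPolynomial (Fin d) R)
    (A : Fin d → Fin m → R) (h1 : ∀ k, 2 * pderiv k Q = C (4 * ∑ j, A k j))
    (h2 : ∀ j, ∑ k : Fin d, (-1)^k.1 * (D k.1 * A k j) = 0) :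
    2 * ∑ k : Fin d, C ((-1)^k.1 * D k.1) * pderiv k Q = 2 * 0 := by
  rw [mul_zero, Finset.mul_sum]
  have h3 : ∀ k : Fin d, 2 * (C ((-1)^k.1 * D k.1) * pderiv k Q) =
      C (∑ j, 4 * ((-1)^k.1 * (D k.1 * A k j))) := by
    intro k
    rw [mul_left_comm, h1, ← map_mul, Finset.mul_sum, Finset.mul_sum]
    congr 1
    refine Finset.sum_congr rfl fun j _ => ?_
    ring
  rw [Finset.sum_congr rfl fun k _ => h3 k, ← map_sum, Finset.sum_comm, Finset.sum_eq_zero, map_zero]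
  intro j _
  rw [← Finset.mul_sum, h2, mul_zero]

lemma sum_pderiv_zero (n : ℕ) :
    ∑ k : Fin (2*n+1), C ((-1)^k.1 * Dk (2*n) (fX n) k.1) * pderiv k (QQ n) = 0 :=
  eq_of_two_mul (sum_pderiv_gen (Dk (2*n) (fX n)) (QQ n) (fun k j => al n (2*n+2) k.succ j)
    (pderiv_QQ n) (sum_al_zero n))

lemma int_zero_gen {R : Type*} [CommRing R] [Algebra ℝ R] {d : ℕ} (D : ℕ → R) (Q : MvPolynomial (Fin d) R)
    (h : ∑ k : Fin d, C ((-1)^k.1 * D k.1) * pderiv k Q = 0) (N : ℕ) :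
    ∑ k : Fin d, (-1)^k.1 * (D k.1 * IntR R d (pderiv k (Q ^ N))) = 0 := by
  have h1 : ∀ k : Fin d, (-1)^k.1 * (D k.1 * IntR R d (pderiv k (Q ^ N))) =
      IntR R d ((N • Q ^ (N-1)) * (C ((-1)^k.1 * D k.1) * pderiv k Q)) := by
    intro k
    rw [← mul_assoc, ← IntR_C_mul]
    congr 1
    rw [Derivation.leibniz_pow]
    simp only [smul_eq_mul, nsmul_eq_mul]
    ring
  rw [Finset.sum_congr rfl fun k _ => h1 k, ← map_sum, ← Finset.mul_sum, h, mul_zero, map_zero]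

/-- Alternating sum of the symbols of the faces vanishes. -/
lemma sum_Fm (n N : ℕ) :
    ∑ e : Fin (2*n+2), (-1)^e.1 * Fm n (sg (2*n) e) e (ys (2*n) e) N = 0 := by
  set A : ℕ → Tens n (2*n+2) := fun e => IntR (Tens n (2*n+2)) (2*n) (aeval (dupV X e) (QQ n ^ N)) with hA
  have h1 : ∀ e : Fin (2*n+2), (-1)^e.1 * Fm n (sg (2*n) e) e (ys (2*n) e) N =
      (-1)^e.1 * (A e.1 * ((if 1 ≤ e.1 then Dk (2*n) (fX n) (e.1-1) else 0)
      + (if e.1 ≤ 2*n then Dk (2*n) (fX n) e.1 else 0))) := by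
    intro e
    rw [Fm, exponent_eq, de_pis, ← map_pow (aeval (dupV X e.1))]
  rw [Finset.sum_congr rfl fun e _ => h1 e]
  rw [Fin.sum_univ_eq_sum_range (fun e => (-1)^e * (A e * ((if 1 ≤ e then Dk (2*n) (fX n) (e-1) else 0)
      + (if e ≤ 2*n then Dk (2*n) (fX n) e else 0)))) (2*n+2)]
  refine (telescope (2*n) A (Dk (2*n) (fX n))).trans ?_
  rw [neg_eq_zero, ← Fin.sum_univ_eq_sum_range
    (fun k => (-1)^k * (Dk (2*n) (fX n) k * (A (k+1) - A k))) (2*n+1)]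
  refine Eq.trans (Finset.sum_congr rfl fun k _ => ?_)
    (int_zero_gen (Dk (2*n) (fX n)) (QQ n) (sum_pderiv_zero n) N)
  rw [stokesR]

lemma face_mid (n : ℕ) (j : Fin (2*n+1)) (a : Fin (2*n+2) → Apol n) :
    FaceData n (sg (2*n) j.castSucc.1) j.castSucc (ys (2*n) j.castSucc) j a (hochFace n (2*n) j a) := by
  have hj := j.2
  have hy : (ys (2*n) j.castSucc).1 = j.1 + 1 := by
    rw [ys_val, Fin.val_castSucc, if_pos hj]
  have hne : ∀ i : Fin (2*n+2), i ≠ j.castSucc → i ≠ ys (2*n) j.castSucc →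
      i.1 ≠ j.1 ∧ i.1 ≠ j.1 + 1 := by
    intro i h1 h2
    rw [ne_eq, Fin.ext_iff] at h1 h2
    rw [hy] at h2
    exact ⟨h1, h2⟩
  have hs : ∀ i : Fin (2*n+2), (sg (2*n) j.castSucc.1 i).1 = if i.1 ≤ j.1 then i.1 else i.1 - 1 := by
    intro i
    have := i.2
    rw [sg_val, Fin.val_castSucc]
    split_ifs <;> omega
  refine ⟨?_, ?_, ?_, ?_, ?_, ?_, ?_, ?_⟩
  · rw [ne_eq, Fin.ext_iff, hy]; simp
  · apply Fin.ext; rw [hs]; simp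
  · apply Fin.ext; rw [hs, hy]; simp
  · rw [hochFace, dif_neg (lt_irrefl _), dif_pos rfl]
    congr 2
    apply Fin.ext; exact hy.symm
  · intro i h1 h2
    obtain ⟨h3, h4⟩ := hne i h1 h2
    have h5 := hs i
    unfold hochFace
    by_cases h : i.1 ≤ j.1
    · rw [if_pos h] at h5
      rw [dif_pos (by omega)]
      congr 1
      exact Fin.ext h5
    · rw [if_neg h] at h5
      rw [dif_neg (by omega), dif_neg (by omega)]
      congr 1
      apply Fin.ext
      simp only
      omega
  · intro i h1 h2
    obtain ⟨h3, h4⟩ := hne i h1 h2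
    rw [ne_eq, Fin.ext_iff, hs]
    split_ifs <;> omega
  · intro i i' h1 h2 h1' h2' h
    obtain ⟨h3, h4⟩ := hne i h1 h2
    obtain ⟨h3', h4'⟩ := hne i' h1' h2'
    rw [Fin.ext_iff, hs, hs] at h
    apply Fin.ext
    split_ifs at h <;> omega
  · intro t ht
    rw [ne_eq, Fin.ext_iff] at ht
    have := t.2
    refine ⟨⟨if t.1 < j.1 then t.1 else t.1 + 1, by split_ifs <;> omega⟩, ?_, ?_, ?_⟩
    · rw [ne_eq, Fin.ext_iff]; simp only [Fin.val_castSucc]; split_ifs <;> omega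
    · rw [ne_eq, Fin.ext_iff, hy]; simp only; split_ifs <;> omega
    · apply Fin.ext; rw [hs]; simp only; split_ifs <;> omega

lemma face_last (n : ℕ) (a : Fin (2*n+2) → Apol n) (b : Fin (2*n+1) → Apol n)
    (hb0 : b 0 = moyal n (a (Fin.last (2*n+1))) (a 0))
    (hbs : ∀ i : Fin (2*n), b i.succ = a i.succ.castSucc) :
    FaceData n (sg (2*n) (Fin.last (2*n+1)).1) (Fin.last (2*n+1)) (ys (2*n) (Fin.last (2*n+1))) 0 a b := by
  have hy : ys (2*n) (Fin.last (2*n+1)) = 0 := by apply Fin.ext; rw [ys_val]; simp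
  rw [hy]
  have hne : ∀ i : Fin (2*n+2), i ≠ Fin.last (2*n+1) → i ≠ 0 →
      i.1 ≠ 2*n+1 ∧ i.1 ≠ 0 := by
    intro i h1 h2
    rw [ne_eq, Fin.ext_iff] at h1 h2
    exact ⟨h1, h2⟩
  have hs : ∀ i : Fin (2*n+2), (sg (2*n) (Fin.last (2*n+1)).1 i).1 = if i.1 < 2*n+1 then i.1 else 0 := by
    intro i
    have := i.2
    rw [sg_val, Fin.val_last, if_pos (by omega)]
  refine ⟨?_, ?_, ?_, ?_, ?_, ?_, ?_, ?_⟩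
  · rw [ne_eq, Fin.ext_iff]; simp
  · apply Fin.ext; rw [hs]; simp
  · apply Fin.ext; rw [hs]; simp
  · exact hb0
  · intro i h1 h2
    obtain ⟨h3, h4⟩ := hne i h1 h2
    have hi := i.2
    have h5 : sg (2*n) (Fin.last (2*n+1)).1 i = Fin.succ (⟨i.1 - 1, by omega⟩ : Fin (2*n)) := by
      apply Fin.ext
      rw [hs, if_pos (by omega), Fin.val_succ]
      simp only
      omega
    rw [h5, hbs]
    congr 1
    apply Fin.ext
    simp only [Fin.val_castSucc, Fin.val_succ]
    omega
  · intro i h1 h2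
    obtain ⟨h3, h4⟩ := hne i h1 h2
    have hi := i.2
    rw [ne_eq, Fin.ext_iff, hs, if_pos (by omega)]
    exact h4
  · intro i i' h1 h2 h1' h2' h
    obtain ⟨h3, h4⟩ := hne i h1 h2
    obtain ⟨h3', h4'⟩ := hne i' h1' h2'
    have := i.2
    have := i'.2
    rw [Fin.ext_iff, hs, hs, if_pos (by omega), if_pos (by omega)] at h
    exact Fin.ext h
  · intro t ht
    rw [ne_eq, Fin.ext_iff] at ht
    have := t.2
    refine ⟨⟨t.1, by omega⟩, ?_, ?_, ?_⟩
    · rw [ne_eq, Fin.ext_iff]; simp only [Fin.val_last]; omega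
    · rw [ne_eq, Fin.ext_iff]; exact ht
    · apply Fin.ext; rw [hs]; simp only; rw [if_pos this]

lemma piOp_zero (n : ℕ) (a : Fin (2*n+1) → Apol n) (i : Fin (2*n+1)) (c : Kc)
    (hi : i ≠ 0) (ha : a i = C c) : piOp n (elemT a) = 0 := by
  have hd : ∀ v, pderiv (i, v) (elemT a) = 0 := by
    intro v
    apply pderiv_prod_eq_zero
    intro j _
    by_cases h : i = j
    · subst h
      rw [ha]
      simp [embA]
    · exact pderiv_embA_ne n _ i j v h _
  obtain ⟨m, rfl⟩ := Fin.exists_succ_eq.mpr hi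
  rw [← Op_pis, pis, Matrix.det_apply', map_sum, LinearMap.sum_apply]
  refine Finset.sum_eq_zero fun σ _ => ?_
  have hz : Op n (2*n+1) (∏ i, (Matrix.of fun m v : Fin (2*n) => (X (m.succ, v) : Tens n (2*n+1))) (σ i) i)
      (elemT a) = 0 := by
    rw [← Finset.prod_erase_mul _ _ (Finset.mem_univ (σ.symm m))]
    rw [Matrix.of_apply, Op_mul_X, Equiv.apply_symm_apply, hd, map_zero]
  rw [Op_mul, hz, map_zero]

lemma tau_zero (n : ℕ) (a : Fin (2*n+1) → Apol n) (i : Fin (2*n+1)) (c : Kc)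
    (hi : i ≠ 0) (ha : a i = C c) : tau n (elemT a) = 0 := by
  rw [tau]
  refine Finset.sum_eq_zero fun K _ => ?_
  rw [piOp_zero n a i c hi ha, map_zero, map_zero, smul_zero]

lemma Lf_sign (n k : ℕ) (b P : Tens n k) (m : ℕ) :
    Lf n k b ((-1)^m * P) = (-1)^m * Lf n k b P := by
  have : ((-1 : Tens n k)^m) = C ((-1)^m) := by
    rw [map_pow, map_neg, map_one]
  rw [this, Lf_C_mul]

/-- expansion of the face with index `e` up to order `T`. -/
def Sf (n : ℕ) (a : Fin (2*n+2) → Apol n) (T : ℕ) (e : Fin (2*n+2)) : Kc :=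
  ∑ N ∈ Finset.range (T+1),
    (algebraMap ℂ Kc ((N.factorial : ℂ)⁻¹) * eps ^ N) *
      Lf n (2*n+2) (elemT a) (Fm n (sg (2*n) e) e (ys (2*n) e) N)

lemma sum_Sf (n : ℕ) (a : Fin (2*n+2) → Apol n) (T : ℕ) :
    ∑ e : Fin (2*n+2), (-1 : Kc)^e.1 * Sf n a T e = 0 := by
  have h4 : ∀ e : Fin (2*n+2), (-1 : Kc)^e.1 * Sf n a T e =
      ∑ N ∈ Finset.range (T+1), (algebraMap ℂ Kc ((N.factorial : ℂ)⁻¹) * eps ^ N) *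
      Lf n (2*n+2) (elemT a) ((-1)^e.1 * Fm n (sg (2*n) e) e (ys (2*n) e) N) := by
    intro e
    rw [Sf, Finset.mul_sum]
    refine Finset.sum_congr rfl fun N _ => ?_
    rw [Lf_sign, mul_left_comm]
  rw [Finset.sum_congr rfl fun e _ => h4 e, Finset.sum_comm]
  refine Finset.sum_eq_zero fun N _ => ?_
  rw [← Finset.mul_sum, ← map_sum, sum_Fm, map_zero, mul_zero]

lemma tau_mid (n : ℕ) (a : Fin (2*n+2) → Apol n) (j : Fin (2*n+1)) : ∃ M0, ∀ M, M0 ≤ M →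
    tau n (elemT (hochFace n (2*n) j a)) = Sf n a M j.castSucc :=
  tau_face n (face_mid n j a)

lemma tau_last (n : ℕ) (a : Fin (2*n+2) → Apol n) (b : Fin (2*n+1) → Apol n)
    (hb0 : b 0 = moyal n (a (Fin.last (2*n+1))) (a 0))
    (hbs : ∀ i : Fin (2*n), b i.succ = a i.succ.castSucc) : ∃ M0, ∀ M, M0 ≤ M →
    tau n (elemT b) = Sf n a M (Fin.last (2*n+1)) :=
  tau_face n (face_last n a b hb0 hbs)

lemma tau_cocycle (n : ℕ) (a : Fin (2*n+2) → Apol n) (b : Fin (2*n+1) → Apol n)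
    (hb0 : b 0 = moyal n (a (Fin.last (2*n+1))) (a 0))
    (hbs : ∀ i : Fin (2*n), b i.succ = a i.succ.castSucc) :
    (∑ j : Fin (2*n+1), (-1:Kc)^(j.1) • tau n (elemT (hochFace n (2*n) j a)))
        + (-1:Kc)^(2*n+1) •
          tau n (elemT b) = 0 := by
  choose M hM using tau_mid n a
  obtain ⟨M', hM'⟩ := tau_last n a b hb0 hbs
  have h1 : ∀ j, M j ≤ M' + ∑ j, M j := fun j =>
    (Finset.single_le_sum (f := M) (fun _ _ => Nat.zero_le _) (Finset.mem_univ j)).trans (Nat.le_add_left _ _)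
  have h2 : M' ≤ M' + ∑ j, M j := Nat.le_add_right _ _
  have h3 := sum_Sf n a (M' + ∑ j, M j)
  rw [Fin.sum_univ_castSucc] at h3
  rw [hM' _ h2, Finset.sum_congr rfl fun j _ => by rw [hM j _ (h1 j), smul_eq_mul], smul_eq_mul]
  exact h3

/-- `τ_{2n}` is a cocycle in the normalized Hochschild cochain complex of
`A^pol_{2n}`: it vanishes whenever one of `a_1,…,a_{2n}` lies in `K·1`, and the
Hochschild coboundary of `τ_{2n}` vanishes:
`τ(a_0⋆a_1⊗⋯⊗a_{2n+1}) + ∑_{j=1}^{2n} (−1)^j τ(a_0⊗⋯⊗a_j⋆a_{j+1}⊗⋯) −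
τ(a_{2n+1}⋆a_0⊗a_1⊗⋯⊗a_{2n}) = 0`. -/
theorem tau_normalized_cocycle (n : ℕ) :
    (∀ (a : Fin (2*n+1) → Apol n) (i : Fin (2*n+1)) (c : Kc),
        i ≠ 0 → a i = C c → tau n (elemT a) = 0) ∧
    (∀ a : Fin (2*n+2) → Apol n,
        (∑ j : Fin (2*n+1), (-1:Kc)^(j.1) • tau n (elemT (hochFace n (2*n) j a)))
        + (-1:Kc)^(2*n+1) •
          tau n (elemT (Fin.cons (moyal n (a (Fin.last (2*n+1))) (a 0))
            (fun i : Fin (2*n) => a ⟨i.1+1, by have := i.2; omega⟩))) = 0) := by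
  exact ⟨tau_zero n, fun a => tau_cocycle n a _ rfl fun _ => rfl⟩

end
end

section
/- τ_{2n} is sp_{2n}-invariant: for every homogeneous quadratic polynomial a ∈ sp_{2n} ⊂ A^pol_{2n} and all a_0,…,a_{2n} ∈ A^pol_{2n}, ∑_{i=0}^{2n} τ_{2n}(a_0⊗⋯⊗[a,a_i]_ε⊗⋯⊗a_{2n}) = 0. -/
noncomputable section
open MvPolynomial MeasureTheory

namespace TauInv

theorem pderiv_comm' {σ : Type*} (i j : σ) (x : MvPolynomial σ Kc) :
    pderiv i (pderiv j x) = pderiv j (pderiv i x) := by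
  classical
  have h : ⁅(pderiv i : Derivation Kc (MvPolynomial σ Kc) (MvPolynomial σ Kc)),
      (pderiv j : Derivation Kc (MvPolynomial σ Kc) (MvPolynomial σ Kc))⁆ = 0 := by
    apply MvPolynomial.derivation_ext
    intro k
    rw [Derivation.commutator_apply]
    simp only [pderiv_X, Pi.single_apply, Derivation.coe_zero, Pi.zero_apply]
    split_ifs <;> simp
  have := congrArg (fun D => D x) h
  simp only [Derivation.commutator_apply, Derivation.coe_zero, Pi.zero_apply] at this
  exact sub_eq_zero.mp this

theorem Dop_apply (n k : ℕ) (i : Fin k) (v) (x : Tens n k) :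
    Dop n k i v x = pderiv (i, v) x := rfl

theorem Dop_comm (n k : ℕ) (p q : Fin k × Fin (2*n)) :
    Dop n k p.1 p.2 * Dop n k q.1 q.2 = Dop n k q.1 q.2 * Dop n k p.1 p.2 := by
  refine LinearMap.ext fun x => ?_
  rw [Module.End.mul_apply, Module.End.mul_apply, Dop_apply, Dop_apply, Dop_apply, Dop_apply]
  exact pderiv_comm' (p.1, p.2) (q.1, q.2) x

theorem exists_sym {R B σ : Type*} [CommSemiring R] [Semiring B] [Algebra R B] (D : σ → B)
    (h : ∀ p q, D p * D q = D q * D p) :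
    ∃ Φ : MvPolynomial σ R →ₐ[R] B, ∀ p, Φ (X p) = D p := by
  have hc : ∀ a ∈ Set.range D, ∀ b ∈ Set.range D, a * b = b * a := by
    rintro _ ⟨p, rfl⟩ _ ⟨q, rfl⟩
    exact h p q
  have := Algebra.isMulCommutative_adjoin R hc
  let _ : CommSemiring (Algebra.adjoin R (Set.range D)) :=
    { (inferInstance : Semiring (Algebra.adjoin R (Set.range D))) with
      mul_comm := fun a b => this.is_comm.comm a b }
  refine ⟨(Algebra.adjoin R (Set.range D)).val.comp (aeval (fun p => (⟨D p,
    Algebra.subset_adjoin ⟨p, rfl⟩⟩ : Algebra.adjoin R (Set.range D)))), ?_⟩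
  intro p
  simp

/-- symbol map -/
theorem exists_Phi (n k : ℕ) : ∃ Φ : Tens n k →ₐ[Kc] Module.End Kc (Tens n k),
    ∀ p, Φ (X p) = Dop n k p.1 p.2 :=
  exists_sym (R := Kc) (fun p : Fin k × Fin (2*n) => Dop n k p.1 p.2) (Dop_comm n k)

def Phi (n k : ℕ) : Tens n k →ₐ[Kc] Module.End Kc (Tens n k) := (exists_Phi n k).choose

theorem Phi_X (n k : ℕ) (p) : Phi n k (X p) = Dop n k p.1 p.2 := (exists_Phi n k).choose_spec p

def alphaS (n k : ℕ) (i j : Fin k) : Tens n k :=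
  algebraMap ℂ Kc (1/2) • ∑ r : Fin n,
    (X (i, pVar n r) * X (j, qVar n r) - X (i, qVar n r) * X (j, pVar n r))

theorem Phi_alphaS (n k : ℕ) (i j : Fin k) : Phi n k (alphaS n k i j) = alphaOp n k i j := by
  rw [alphaS, alphaOp, map_smul, map_sum]
  simp only [map_sub, map_mul, Phi_X]

def matS (n : ℕ) : Matrix (Fin (2*n)) (Fin (2*n)) (Tens n (2*n+1)) :=
  Matrix.of fun v m => X (m.succ, v)

theorem Phi_det (n : ℕ) : Phi n (2*n+1) (matS n).det = piOp n := by
  rw [Matrix.det_apply, piOp, map_sum]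
  refine Finset.sum_congr rfl fun σ _ => ?_
  rw [← List.prod_ofFn, Units.smul_def, map_zsmul, map_list_prod, List.map_ofFn]
  congr 3
  funext m
  simp [matS, Phi_X]

def powS (n k : ℕ) (K : Pairs k → ℕ) : Tens n k :=
  ∏ p : Pairs k, alphaS n k p.1.1 p.1.2 ^ (K p)

theorem Phi_powS (n k : ℕ) (K : Pairs k → ℕ) : Phi n k (powS n k K) = alphaPowProd n k K := by
  rw [powS, alphaPowProd, ← Finset.prod_map_toList, map_list_prod, List.map_map]
  congr 2
  funext p
  simp [Phi_alphaS]

/-! degree -/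
theorem Dop_homog {n k d : ℕ} (i : Fin k) (v) {x : Tens n k} (h : x.IsHomogeneous d) :
    (Dop n k i v x).IsHomogeneous (d-1) := h.pderiv

theorem Dop_zero {n k : ℕ} (i : Fin k) (v) {x : Tens n k} (h : x.IsHomogeneous 0) :
    Dop n k i v x = 0 := by
  rw [← totalDegree_zero_iff_isHomogeneous, totalDegree_eq_zero_iff_eq_C] at h
  rw [h]
  exact pderiv_C

theorem alphaOp_apply (n k : ℕ) (i j : Fin k) (x : Tens n k) :
    alphaOp n k i j x = algebraMap ℂ Kc (1/2) • ∑ r : Fin n,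
      (pderiv (i, pVar n r) (pderiv (j, qVar n r) x)
        - pderiv (i, qVar n r) (pderiv (j, pVar n r) x)) := by
  simp [alphaOp, Dop, LinearMap.sum_apply]

theorem alphaOp_homog {n k d : ℕ} (i j : Fin k) {x : Tens n k} (h : x.IsHomogeneous d) :
    (alphaOp n k i j x).IsHomogeneous (d-1-1) := by
  rw [alphaOp_apply]
  refine (homogeneousSubmodule _ _ _).smul_mem _ (Submodule.sum_mem _ fun r _ =>
    Submodule.sub_mem _ ?_ ?_)
  · exact h.pderiv.pderiv
  · exact h.pderiv.pderiv

theorem alphaOp_zero {n k : ℕ} (i j : Fin k) {x : Tens n k} (h : x.IsHomogeneous 0) :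
    alphaOp n k i j x = 0 := by
  rw [← totalDegree_zero_iff_isHomogeneous, totalDegree_eq_zero_iff_eq_C] at h
  rw [h, alphaOp_apply]
  simp

theorem alphaOp_pow_homog {n k : ℕ} (i j : Fin k) (m : ℕ) : ∀ (d : ℕ) (x : Tens n k), d < m →
    x.IsHomogeneous d → (alphaOp n k i j ^ m) x = 0 := by
  induction m with
  | zero => intro d x h; omega
  | succ m ih =>
    intro d x hd hx
    rw [pow_succ, Module.End.mul_apply]
    rcases Nat.eq_zero_or_pos d with rfl | h0
    · rw [alphaOp_zero i j hx, map_zero]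
    · exact ih (d-1-1) _ (by omega) (alphaOp_homog i j hx)

theorem alphaOp_pow_eq_zero {n k : ℕ} (i j : Fin k) (m : ℕ) (x : Tens n k)
    (h : x.totalDegree < m) : (alphaOp n k i j ^ m) x = 0 := by
  rw [← sum_homogeneousComponent x, map_sum]
  refine Finset.sum_eq_zero fun d hd => ?_
  refine alphaOp_pow_homog i j m d _ ?_ (homogeneousComponent_isHomogeneous d x)
  have := Finset.mem_range.mp hd
  omega

theorem pow_term_zero (n : ℕ) (K : Pairs (2*n+1) → ℕ) (x : Tens n (2*n+1)) (p)
    (h : x.totalDegree < K p) : alphaPowProd n (2*n+1) K (piOp n x) = 0 := by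
  rw [← Phi_powS, ← Phi_det, ← Module.End.mul_apply, ← map_mul, powS,
    ← Finset.prod_erase_mul _ _ (Finset.mem_univ p), mul_right_comm, map_mul, map_pow, Phi_alphaS,
    Module.End.mul_apply, alphaOp_pow_eq_zero _ _ _ _ h, map_zero]

def coefK (n : ℕ) (K : Pairs (2*n+1) → ℕ) : Kc :=
  (algebraMap ℂ Kc
        ((((∫ u in simplexSet (2*n),
            ∏ p : Pairs (2*n+1),
              (2 * cons0 (2*n) u p.1.1 - 2 * cons0 (2*n) u p.1.2 + 1) ^ (K p)) : ℝ) : ℂ)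
          * (∏ p : Pairs (2*n+1), ((K p).factorial : ℂ))⁻¹)
        * eps ^ (∑ p : Pairs (2*n+1), K p))

theorem tau_eq (n : ℕ) (x : Tens n (2*n+1)) (N : ℕ) (hN : x.totalDegree < N) :
    tau n x = ∑ K ∈ Fintype.piFinset (fun _ : Pairs (2*n+1) => Finset.range N),
      coefK n K • constantCoeff (alphaPowProd n (2*n+1) K (piOp n x)) := by
  rw [tau]
  refine Finset.sum_subset ?_ ?_
  · intro K hK
    simp only [Fintype.mem_piFinset, Finset.mem_range] at hK ⊢
    intro p
    have := hK p
    omega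
  · intro K _ hK
    simp only [Fintype.mem_piFinset, Finset.mem_range, not_forall] at hK
    obtain ⟨p, hp⟩ := hK
    rw [pow_term_zero n K x p (by omega), map_zero, smul_zero]

/-! derivations -/
def pb (n : ℕ) (a : Apol n) : Derivation Kc (Apol n) (Apol n) :=
  ∑ r : Fin n, ((pderiv (pVar n r) a) • pderiv (qVar n r)
    - (pderiv (qVar n r) a) • pderiv (pVar n r))

def Eop (n k : ℕ) (a : Apol n) : Derivation Kc (Tens n k) (Tens n k) :=
  ∑ i : Fin k, ∑ r : Fin n, ((embA n k i (pderiv (pVar n r) a)) • pderiv (i, qVar n r)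
    - (embA n k i (pderiv (qVar n r) a)) • pderiv (i, pVar n r))

theorem pderiv_embA (n k : ℕ) (i j : Fin k) (v) (g : Apol n) :
    pderiv (j, v) (embA n k i g) = if j = i then embA n k i (pderiv v g) else 0 := by
  split_ifs with h
  · subst h
    have hf : Function.Injective (fun v : Fin (2*n) => (j, v)) := fun a b h => by simpa using h
    exact pderiv_rename hf v g
  · apply pderiv_eq_zero_of_notMem_vars
    intro hv
    classical
    have := vars_rename _ _ hv
    simp at this
    exact h this.2.symm

theorem derivSum {ι R A : Type*} [CommRing R] [CommRing A] [Algebra R A] (s : Finset ι)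
    (D : ι → Derivation R A A) (x : A) : (∑ i ∈ s, D i) x = ∑ i ∈ s, D i x := by
  classical
  induction s using Finset.induction_on with
  | empty => simp
  | insert a s ha ih => rw [Finset.sum_insert ha, Finset.sum_insert ha, Derivation.add_apply, ih]

theorem pb_apply (n : ℕ) (a g : Apol n) : pb n a g =
    ∑ r : Fin n, ((pderiv (pVar n r) a) * pderiv (qVar n r) g
    - (pderiv (qVar n r) a) * pderiv (pVar n r) g) := by
  simp [pb, derivSum]

theorem Eop_apply (n k : ℕ) (a : Apol n) (x : Tens n k) : Eop n k a x =
    ∑ i : Fin k, ∑ r : Fin n, ((embA n k i (pderiv (pVar n r) a)) * pderiv (i, qVar n r) x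
    - (embA n k i (pderiv (qVar n r) a)) * pderiv (i, pVar n r) x) := by
  simp [Eop, derivSum]

theorem Eop_embA (n k : ℕ) (a g : Apol n) (i : Fin k) :
    Eop n k a (embA n k i g) = embA n k i (pb n a g) := by
  rw [Eop_apply, pb_apply, Finset.sum_eq_single i]
  · simp [pderiv_embA]
  · intro j _ hj
    simp [pderiv_embA, hj]
  · simp

theorem deriv_prod {ι R A : Type*} [CommRing R] [CommRing A] [Algebra R A] [DecidableEq ι]
    (s : Finset ι) (D : Derivation R A A) (f : ι → A) :
    D (∏ i ∈ s, f i) = ∑ i ∈ s, (∏ j ∈ s.erase i, f j) * D (f i) := by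
  induction s using Finset.induction_on with
  | empty => simp
  | insert a s ha ih =>
    rw [Finset.prod_insert ha, Finset.sum_insert ha, Derivation.leibniz, ih, Finset.erase_insert ha,
      smul_eq_mul, smul_eq_mul, add_comm, Finset.mul_sum]
    congr 1
    refine Finset.sum_congr rfl fun i hi => ?_
    have : a ≠ i := fun h => ha (h ▸ hi)
    rw [Finset.erase_insert_of_ne this, Finset.prod_insert (by simp [ha]), mul_assoc]

theorem Eop_elemT (n k : ℕ) (a : Apol n) (b : Fin k → Apol n) :
    Eop n k a (elemT b) = ∑ i, elemT (Function.update b i (pb n a (b i))) := by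
  rw [elemT, deriv_prod]
  refine Finset.sum_congr rfl fun i _ => ?_
  rw [elemT, ← Finset.prod_erase_mul _ _ (Finset.mem_univ i), Function.update_self, Eop_embA]
  congr 1
  refine Finset.prod_congr rfl fun j hj => ?_
  rw [Function.update_of_ne (Finset.ne_of_mem_erase hj)]

/-! symbols of the invariance -/
def Smat (n : ℕ) (a : Apol n) (w v : Fin (2*n)) : Kc := constantCoeff (pderiv w (pderiv v a))

theorem Smat_symm (n : ℕ) (a : Apol n) (w v) : Smat n a w v = Smat n a v w := by
  rw [Smat, pderiv_comm', Smat]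

theorem Smat_spec (n : ℕ) (a : Apol n) (ha : a.IsHomogeneous 2) (w v) :
    pderiv w (pderiv v a) = C (Smat n a w v) := by
  have h : (pderiv w (pderiv v a)).IsHomogeneous 0 := ha.pderiv.pderiv
  rw [← totalDegree_zero_iff_isHomogeneous, totalDegree_eq_zero_iff_eq_C] at h
  rw [Smat]
  exact h

def delX (n k : ℕ) (a : Apol n) (i : Fin k) (w : Fin (2*n)) : Tens n k :=
  ∑ r : Fin n, (C (Smat n a w (pVar n r)) * X (i, qVar n r)
    - C (Smat n a w (qVar n r)) * X (i, pVar n r))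

def del (n k : ℕ) (a : Apol n) : Derivation Kc (Tens n k) (Tens n k) :=
  mkDerivation Kc (fun p => delX n k a p.1 p.2)

theorem del_X (n k : ℕ) (a : Apol n) (p) : del n k a (X p) = delX n k a p.1 p.2 := by
  simp [del]

theorem Phi_C (n k : ℕ) (c : Kc) : Phi n k (C c) = algebraMap Kc _ c := by
  exact (Phi n k).commutes c

theorem Phi_C_apply (n k : ℕ) (c : Kc) (x) : Phi n k (C c) x = c • x := by
  rw [Phi_C]; rfl

theorem Phi_delX_apply (n k : ℕ) (a : Apol n) (i : Fin k) (w : Fin (2*n)) (x) :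
    Phi n k (delX n k a i w) x = ∑ r : Fin n, (C (Smat n a w (pVar n r)) * pderiv (i, qVar n r) x
    - C (Smat n a w (qVar n r)) * pderiv (i, pVar n r) x) := by
  rw [delX, map_sum, LinearMap.sum_apply]
  refine Finset.sum_congr rfl fun r _ => ?_
  rw [map_sub, map_mul, map_mul, LinearMap.sub_apply, Module.End.mul_apply, Module.End.mul_apply,
    Phi_C_apply, Phi_C_apply, Phi_X, Phi_X, smul_eq_C_mul, smul_eq_C_mul]
  rfl

theorem Dop_Eop (n k : ℕ) (a : Apol n) (ha : a.IsHomogeneous 2) (p : Fin k × Fin (2*n)) (x) :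
    Dop n k p.1 p.2 (Eop n k a x) = Eop n k a (Dop n k p.1 p.2 x)
      + Phi n k (delX n k a p.1 p.2) x := by
  obtain ⟨i, w⟩ := p
  change pderiv (i, w) (Eop n k a x) = Eop n k a (pderiv (i, w) x) + _
  rw [Phi_delX_apply, Eop_apply, Eop_apply, map_sum]
  have key : ∀ j : Fin k, pderiv (i, w) (∑ r : Fin n,
      ((embA n k j (pderiv (pVar n r) a)) * pderiv (j, qVar n r) x
        - (embA n k j (pderiv (qVar n r) a)) * pderiv (j, pVar n r) x)) =
      (∑ r : Fin n,
      ((embA n k j (pderiv (pVar n r) a)) * pderiv (j, qVar n r) (pderiv (i, w) x)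
        - (embA n k j (pderiv (qVar n r) a)) * pderiv (j, pVar n r) (pderiv (i, w) x))) +
      if i = j then ∑ r : Fin n, (C (Smat n a w (pVar n r)) * pderiv (i, qVar n r) x
        - C (Smat n a w (qVar n r)) * pderiv (i, pVar n r) x) else 0 := by
    intro j
    split_ifs with h
    · subst h
      rw [map_sum, ← Finset.sum_add_distrib]
      refine Finset.sum_congr rfl fun r _ => ?_
      rw [map_sub, pderiv_mul, pderiv_mul, pderiv_embA, pderiv_embA, if_pos rfl, if_pos rfl,
        Smat_spec n a ha, Smat_spec n a ha, pderiv_comm' (i, w), pderiv_comm' (i, w)]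
      simp only [embA, rename_C]
      ring
    · rw [map_sum, add_zero]
      refine Finset.sum_congr rfl fun r _ => ?_
      rw [map_sub, pderiv_mul, pderiv_mul, pderiv_embA, pderiv_embA, if_neg h, if_neg h,
        pderiv_comm' (i, w), pderiv_comm' (i, w)]
      ring
  rw [Finset.sum_congr rfl fun j _ => key j, Finset.sum_add_distrib]
  simp

theorem Phi_Eop (n k : ℕ) (a : Apol n) (ha : a.IsHomogeneous 2) (f : Tens n k) : ∀ x,
    Phi n k f (Eop n k a x) = Eop n k a (Phi n k f x) + Phi n k (del n k a f) x := by
  induction f using MvPolynomial.induction_on with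
  | C c =>
    intro x
    rw [Phi_C_apply, Phi_C_apply, ← algebraMap_eq, Derivation.map_algebraMap, map_zero,
      LinearMap.zero_apply, add_zero, Derivation.map_smul]
  | add f g hf hg =>
    intro x
    simp only [map_add, LinearMap.add_apply, hf, hg]
    abel
  | mul_X f p hf =>
    intro x
    rw [map_mul, Module.End.mul_apply, Phi_X, Dop_Eop n k a ha, map_add, hf, Derivation.leibniz,
      smul_eq_mul, smul_eq_mul, map_add, map_mul, mul_comm (X p), map_mul, Phi_X, del_X,
      LinearMap.add_apply, Module.End.mul_apply, Module.End.mul_apply, Module.End.mul_apply]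
    abel

theorem del_alphaS (n k : ℕ) (a : Apol n) (i j : Fin k) : del n k a (alphaS n k i j) = 0 := by
  rw [alphaS, Derivation.map_smul, map_sum]
  convert smul_zero _
  let G : Fin n → Fin n → Tens n k := fun r s =>
    C (Smat n a (pVar n r) (pVar n s)) * X (i, qVar n s) * X (j, qVar n r)
        - C (Smat n a (pVar n r) (qVar n s)) * X (i, pVar n s) * X (j, qVar n r)
        - C (Smat n a (pVar n s) (qVar n r)) * X (i, qVar n s) * X (j, pVar n r)
        + C (Smat n a (qVar n r) (qVar n s)) * X (i, pVar n s) * X (j, pVar n r)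
  have h1 : ∀ r : Fin n, del n k a (X (i, pVar n r) * X (j, qVar n r)
      - X (i, qVar n r) * X (j, pVar n r)) = ∑ s : Fin n, (G r s - G s r) := by
    intro r
    rw [map_sub, Derivation.leibniz, Derivation.leibniz, del_X, del_X, del_X, del_X]
    simp only [delX, smul_eq_mul, Finset.mul_sum, ← Finset.sum_add_distrib,
      ← Finset.sum_sub_distrib]
    refine Finset.sum_congr rfl fun s _ => ?_
    simp only [G]
    rw [Smat_symm n a (qVar n r) (pVar n s), Smat_symm n a (pVar n s) (pVar n r),
      Smat_symm n a (qVar n s) (qVar n r)]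
    ring
  rw [Finset.sum_congr rfl fun r _ => h1 r]
  simp_rw [Finset.sum_sub_distrib]
  rw [sub_eq_zero, Finset.sum_comm]

theorem deriv_det {R B : Type*} [CommRing R] [CommRing B] [Algebra R B] {m : ℕ}
    (D : Derivation R B B) (A M : Matrix (Fin m) (Fin m) B)
    (h : ∀ i j, D (A i j) = (M * A) i j) : D A.det = M.trace * A.det := by
  have h1 : D A.det = ∑ j, (A.updateCol j (fun i => (M * A) i j)).det := by
    simp_rw [Matrix.det_apply]
    rw [map_sum, Finset.sum_comm]
    refine Finset.sum_congr rfl fun σ _ => ?_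
    rw [Units.smul_def, map_zsmul, deriv_prod, ← Finset.smul_sum]
    congr 1
    refine Finset.sum_congr rfl fun j _ => ?_
    rw [← Finset.prod_erase_mul _ _ (Finset.mem_univ j), Matrix.updateCol_self, h]
    congr 1
    refine Finset.prod_congr rfl fun l hl => ?_
    rw [Matrix.updateCol_ne (Finset.ne_of_mem_erase hl)]
  have h2 : ∀ j, (A.updateCol j (fun i => (M * A) i j)).det = (A.adjugate * (M * A)) j j := by
    intro j
    rw [← Matrix.cramer_apply, Matrix.cramer_eq_adjugate_mulVec]
    rfl
  rw [h1, Finset.sum_congr rfl fun j _ => h2 j]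
  change (A.adjugate * (M * A)).trace = _
  rw [Matrix.trace_mul_comm, Matrix.mul_assoc, Matrix.mul_adjugate]
  simp [mul_comm]

theorem del_det (n : ℕ) (a : Apol n) : del n (2*n+1) a (matS n).det = 0 := by
  let M : Matrix (Fin (2*n)) (Fin (2*n)) (Tens n (2*n+1)) := Matrix.of fun w v =>
    ∑ r : Fin n, ((if v = qVar n r then C (Smat n a w (pVar n r)) else 0)
      - (if v = pVar n r then C (Smat n a w (qVar n r)) else 0))
  rw [deriv_det _ _ M]
  · have : M.trace = 0 := by
      simp only [Matrix.trace, Matrix.diag_apply, M, Matrix.of_apply]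
      rw [Finset.sum_comm]
      refine Finset.sum_eq_zero fun r _ => ?_
      rw [Finset.sum_sub_distrib]
      simp [Smat_symm n a (qVar n r) (pVar n r)]
    rw [this, zero_mul]
  · intro w m
    simp only [matS, Matrix.of_apply, del_X, delX, Matrix.mul_apply, M, Finset.sum_mul]
    rw [Finset.sum_comm]
    refine Finset.sum_congr rfl fun r _ => ?_
    simp [sub_mul, Finset.sum_sub_distrib]

theorem del_powS (n k : ℕ) (a : Apol n) (K) : del n k a (powS n k K) = 0 := by
  rw [powS, deriv_prod]
  refine Finset.sum_eq_zero fun p _ => ?_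
  rw [Derivation.leibniz_pow, del_alphaS]
  simp

theorem const_Eop (n k : ℕ) (a : Apol n) (ha : a.IsHomogeneous 2) (x) :
    constantCoeff (Eop n k a x) = 0 := by
  have h : ∀ v, constantCoeff (pderiv v a) = 0 := by
    intro v
    have : (pderiv v a).IsHomogeneous 1 := ha.pderiv
    exact this.coeff_eq_zero (by simp)
  rw [Eop_apply]
  simp [embA, h]

theorem term_inv (n : ℕ) (a : Apol n) (ha : a.IsHomogeneous 2) (K) (x) :
    constantCoeff (alphaPowProd n (2*n+1) K (piOp n (Eop n (2*n+1) a x))) = 0 := by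
  rw [← Phi_powS, ← Phi_det, ← Module.End.mul_apply, ← map_mul, Phi_Eop _ _ _ ha,
    Derivation.leibniz, del_det, del_powS]
  simp [const_Eop n _ a ha]

theorem main_aux (n : ℕ) (a : Apol n) (ha : a.IsHomogeneous 2) (b : Fin (2*n+1) → Apol n) :
    ∑ i : Fin (2*n+1), tau n (elemT (Function.update b i (pb n a (b i)))) = 0 := by
  let N := (Finset.univ.sup fun i : Fin (2*n+1) =>
    (elemT (Function.update b i (pb n a (b i)))).totalDegree) + 1
  have hN : ∀ i, (elemT (Function.update b i (pb n a (b i)))).totalDegree < N := fun i =>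
    Nat.lt_succ_of_le (Finset.le_sup (f := fun i : Fin (2*n+1) =>
      (elemT (Function.update b i (pb n a (b i)))).totalDegree) (Finset.mem_univ i))
  rw [Finset.sum_congr rfl fun i _ => tau_eq n _ N (hN i), Finset.sum_comm]
  refine Finset.sum_eq_zero fun K _ => ?_
  rw [← Finset.smul_sum, ← map_sum, ← map_sum, ← map_sum, ← Eop_elemT, term_inv n a ha, smul_zero]

theorem sp_homog (n : ℕ) (a : Apol n) (ha : a ∈ spSub n) : a.IsHomogeneous 2 := by
  induction ha using Submodule.span_induction with
  | mem x hx =>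
    obtain ⟨i, j, rfl⟩ := hx
    exact (isHomogeneous_X _ i).mul (isHomogeneous_X _ j)
  | zero => exact isHomogeneous_zero _ _ _
  | add x y _ _ hx hy => exact hx.add hy
  | smul c x _ hx =>
    rw [← algebraMap_smul Kc c x]
    exact (homogeneousSubmodule _ _ 2).smul_mem _ hx

/-! the bracket -/

theorem elemT_two (n : ℕ) (f g : Apol n) : elemT ![f, g] = embA n 2 0 f * embA n 2 1 g := by
  simp [elemT, Fin.prod_univ_two]

theorem alpha_elem (n : ℕ) (f g : Apol n) :
    alphaOp n 2 0 1 (embA n 2 0 f * embA n 2 1 g) = algebraMap ℂ Kc (1/2) • ∑ r : Fin n,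
      (embA n 2 0 (pderiv (pVar n r) f) * embA n 2 1 (pderiv (qVar n r) g)
        - embA n 2 0 (pderiv (qVar n r) f) * embA n 2 1 (pderiv (pVar n r) g)) := by
  rw [alphaOp_apply]
  refine congrArg (fun z : Tens n 2 => algebraMap ℂ Kc (1/2) • z) ?_
  refine Finset.sum_congr rfl fun r _ => ?_
  simp [pderiv_embA]
  ring

def Wsub (n d : ℕ) : Submodule Kc (Tens n 2) :=
  Submodule.span Kc {x | ∃ f g : Apol n, f.IsHomogeneous d ∧ x = embA n 2 0 f * embA n 2 1 g}

theorem alpha_W (n d : ℕ) (x : Tens n 2) (hx : x ∈ Wsub n d) :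
    alphaOp n 2 0 1 x ∈ Wsub n (d-1) := by
  induction hx using Submodule.span_induction with
  | mem x hx =>
    obtain ⟨f, g, hf, rfl⟩ := hx
    rw [alpha_elem]
    refine Submodule.smul_mem _ _ (Submodule.sum_mem _ fun r _ => Submodule.sub_mem _ ?_ ?_)
    · exact Submodule.subset_span ⟨_, _, hf.pderiv, rfl⟩
    · exact Submodule.subset_span ⟨_, _, hf.pderiv, rfl⟩
  | zero => rw [map_zero]; exact Submodule.zero_mem _
  | add x y _ _ hx hy => rw [map_add]; exact Submodule.add_mem _ hx hy
  | smul c x _ hx => rw [map_smul]; exact Submodule.smul_mem _ _ hx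

theorem alpha_W0 (n : ℕ) (x : Tens n 2) (hx : x ∈ Wsub n 0) : alphaOp n 2 0 1 x = 0 := by
  induction hx using Submodule.span_induction with
  | mem x hx =>
    obtain ⟨f, g, hf, rfl⟩ := hx
    rw [← totalDegree_zero_iff_isHomogeneous, totalDegree_eq_zero_iff_eq_C] at hf
    rw [alpha_elem, hf]
    simp
  | zero => rw [map_zero]
  | add x y _ _ hx hy => rw [map_add, hx, hy, add_zero]
  | smul c x _ hx => rw [map_smul, hx, smul_zero]

theorem alpha_cube (n : ℕ) (a g : Apol n) (ha : a.IsHomogeneous 2) (m : ℕ) :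
    (alphaOp n 2 0 1 ^ (m + 3)) (elemT ![a, g]) = 0 := by
  have h0 : elemT ![a, g] ∈ Wsub n 2 := by
    rw [elemT_two]
    exact Submodule.subset_span ⟨_, _, ha, rfl⟩
  have h2 := alpha_W _ _ _ (alpha_W _ _ _ h0)
  have h3 := alpha_W0 _ _ h2
  rw [pow_add, Module.End.mul_apply]
  have : (alphaOp n 2 0 1 ^ 3) (elemT ![a, g]) = 0 := by
    rw [pow_succ, pow_two]
    exact h3
  rw [this, map_zero]

theorem expEps_eq (n : ℕ) (x : Tens n 2) (N : ℕ) (h : x.totalDegree < N) :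
    expEps (alphaOp n 2 0 1) x = ∑ m ∈ Finset.range N,
      (algebraMap ℂ Kc ((m.factorial : ℂ)⁻¹) * eps ^ m) • (alphaOp n 2 0 1 ^ m) x := by
  rw [expEps]
  refine Finset.sum_subset ?_ ?_
  · intro m hm
    simp only [Finset.mem_range] at *
    omega
  · intro m _ hm
    simp only [Finset.mem_range] at hm
    rw [alphaOp_pow_eq_zero _ _ _ _ (by omega), smul_zero]

def sw (n : ℕ) : Tens n 2 →ₐ[Kc] Tens n 2 :=
  rename (fun p : Fin 2 × Fin (2*n) => (Equiv.swap 0 1 p.1, p.2))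

def mm (n : ℕ) : Tens n 2 →ₐ[Kc] Apol n :=
  aeval (fun v : Fin 2 × Fin (2*n) => (X v.2 : Apol n))

theorem mm_sw (n : ℕ) (x) : mm n (sw n x) = mm n x := by
  rw [mm, sw, aeval_rename]
  rfl

theorem mm_emb (n : ℕ) (i) (f) : mm n (embA n 2 i f) = f := by
  rw [mm, embA, aeval_rename]
  exact aeval_X_left_apply f

theorem sw_elem (n : ℕ) (f g : Apol n) : sw n (elemT ![f, g]) = elemT ![g, f] := by
  rw [elemT_two, elemT_two, map_mul, mul_comm]
  simp only [sw, embA, rename_rename]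
  rfl

theorem pderiv_sw (n : ℕ) (i v) (x) :
    pderiv (Equiv.swap 0 1 i, v) (sw n x) = sw n (pderiv (i, v) x) := by
  have hf : Function.Injective (fun p : Fin 2 × Fin (2*n) => (Equiv.swap 0 1 p.1, p.2)) := by
    rintro ⟨a, b⟩ ⟨c, d⟩ h
    simpa using h
  exact pderiv_rename hf (i, v) x

theorem alpha_sw (n : ℕ) (x) : alphaOp n 2 0 1 (sw n x) = - sw n (alphaOp n 2 0 1 x) := by
  have h0 : ∀ v x, pderiv (0, v) (sw n x) = sw n (pderiv (1, v) x) := fun v x => by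
    simpa using pderiv_sw n 1 v x
  have h1 : ∀ v x, pderiv (1, v) (sw n x) = sw n (pderiv (0, v) x) := fun v x => by
    simpa using pderiv_sw n 0 v x
  rw [alphaOp_apply, alphaOp_apply, map_smul, ← smul_neg, map_sum, ← Finset.sum_neg_distrib]
  congr 1
  refine Finset.sum_congr rfl fun r _ => ?_
  rw [h1, h1, h0, h0, map_sub, pderiv_comm' (1, pVar n r), pderiv_comm' (1, qVar n r)]
  ring

theorem alpha_pow_sw (n m : ℕ) : ∀ x, (alphaOp n 2 0 1 ^ m) (sw n x)
    = (-1 : Kc) ^ m • sw n ((alphaOp n 2 0 1 ^ m) x) := by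
  induction m with
  | zero => intro x; simp
  | succ m ih =>
    intro x
    rw [pow_succ, Module.End.mul_apply, alpha_sw, map_neg, ih, Module.End.mul_apply, pow_succ]
    simp

theorem brkt_eq (n : ℕ) (a g : Apol n) (ha : a.IsHomogeneous 2) : brkt n a g = pb n a g := by
  let N := max (elemT ![a, g]).totalDegree (elemT ![g, a]).totalDegree
  have e1 : moyal n a g = mm n (expEps (alphaOp n 2 0 1) (elemT ![a, g])) := rfl
  have e2 : moyal n g a = mm n (expEps (alphaOp n 2 0 1) (elemT ![g, a])) := rfl
  have l1 : (elemT ![a, g]).totalDegree < N + 3 :=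
    Nat.lt_add_right 2 (Nat.lt_succ_of_le (le_max_left _ _))
  have l2 : (elemT ![g, a]).totalDegree < N + 3 :=
    Nat.lt_add_right 2 (Nat.lt_succ_of_le (le_max_right _ _))
  rw [brkt, e1, e2, expEps_eq n _ _ l1, expEps_eq n _ _ l2, ← sw_elem n a g]
  simp only [alpha_pow_sw, map_sum, map_smul, mm_sw]
  rw [add_comm N 3, Finset.sum_range_add, Finset.sum_range_add]
  simp only [add_comm 3, alpha_cube n a g ha, map_zero, smul_zero, Finset.sum_const_zero, add_zero]
  simp only [Finset.sum_range_succ, Finset.sum_range_zero]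
  have h1 : mm n (alphaOp n 2 0 1 (elemT ![a, g])) = algebraMap ℂ Kc (1/2) • pb n a g := by
    rw [elemT_two, alpha_elem, map_smul, pb_apply, map_sum]
    simp only [map_sub, map_mul, mm_emb]
  have h2 : (LaurentPolynomial.T (-1) : Kc) * eps = 1 := by
    rw [eps, ← LaurentPolynomial.T_add]; simp
  have h3 : algebraMap ℂ Kc (1/2) + algebraMap ℂ Kc (1/2) = 1 := by
    rw [← map_add]; norm_num
  have h4 : (LaurentPolynomial.T (-1) : Kc) * (eps * algebraMap ℂ Kc (1/2)
      + eps * algebraMap ℂ Kc (1/2)) = 1 := by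
    rw [← mul_add, h3, mul_one, h2]
  simp only [pow_zero, pow_one, h1, Nat.factorial_zero, Nat.factorial_one, Nat.cast_one, inv_one,
    map_one, one_mul, one_smul, neg_smul, smul_neg, neg_one_sq, zero_add]
  rw [add_sub_add_right_eq_sub, add_sub_add_left_eq_sub, sub_neg_eq_add, smul_smul, ← add_smul,
    smul_smul, h4, one_smul]

end TauInv

/-- `τ_{2n}` is `sp_{2n}`-invariant: for every homogeneous quadratic
polynomial `a ∈ sp_{2n} ⊂ A^pol_{2n}` and all `a_0,…,a_{2n}`,
`∑_{i=0}^{2n} τ_{2n}(a_0⊗⋯⊗[a,a_i]_ε⊗⋯⊗a_{2n}) = 0`. -/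
theorem tau_sp_invariant (n : ℕ) (a : Apol n) (ha : a ∈ spSub n)
    (b : Fin (2*n+1) → Apol n) :
    ∑ i : Fin (2*n+1), tau n (elemT (Function.update b i (brkt n a (b i)))) = 0 := by
  have h := TauInv.sp_homog n a ha
  have e : ∀ i, brkt n a (b i) = TauInv.pb n a (b i) := fun i => TauInv.brkt_eq n a (b i) h
  simp only [e]
  exact TauInv.main_aux n a h b

end
end

section
/- τ_{2n}(c_{2n}) = 1, where c_{2n} = ∑_{σ∈S_{2n}} sign(σ) 1⊗y_{σ(1)}⊗⋯⊗y_{σ(2n)} ∈ A^{⊗(2n+1)}. -/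
noncomputable section
open MvPolynomial MeasureTheory

/-- The cycle `c_{2n} = ∑_{σ∈S_{2n}} sign(σ) 1⊗y_{σ(1)}⊗⋯⊗y_{σ(2n)}`. -/
def c2n (n : ℕ) : Tens n (2*n+1) :=
  ∑ σ : Equiv.Perm (Fin (2*n)), (Equiv.Perm.sign σ : ℤ) •
    elemT (Fin.cons 1 (fun i : Fin (2*n) => (X (σ i) : Apol n)))

/-! ### Volume of the simplex -/

theorem simplex_iUnion (m : ℕ) :
    (⋃ σ : Equiv.Perm (Fin m), {u : Fin m → ℝ | u ∘ σ ∈ simplexSet m}) = Set.Icc 0 1 := by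
  ext u
  simp only [Set.mem_iUnion, Set.mem_ofPred_eq, simplexSet, Set.mem_Icc, Pi.le_def,
    Function.comp_apply]
  constructor
  · rintro ⟨σ, h, -⟩
    refine ⟨fun i => ?_, fun i => ?_⟩
    · simpa using (h (σ.symm i)).1
    · simpa using (h (σ.symm i)).2
  · rintro ⟨h0, h1⟩
    exact ⟨Tuple.sort u, fun i => ⟨h0 _, h1 _⟩, fun i j hij => Tuple.monotone_sort u hij⟩

theorem simplex_measurable (m : ℕ) : MeasurableSet (simplexSet m) := by
  have : IsClosed (simplexSet m) := by
    have e : simplexSet m = (⋂ i, {u : Fin m → ℝ | 0 ≤ u i ∧ u i ≤ 1}) ∩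
        ⋂ i, ⋂ j, ⋂ (_ : i ≤ j), {u : Fin m → ℝ | u i ≤ u j} := by
      ext u; simp [simplexSet]
    rw [e]
    refine IsClosed.inter (isClosed_iInter fun i => ?_)
      (isClosed_iInter fun i => isClosed_iInter fun j => isClosed_iInter fun _ => ?_)
    · exact (isClosed_le continuous_const (continuous_apply i)).inter
        (isClosed_le (continuous_apply i) continuous_const)
    · exact isClosed_le (continuous_apply i) (continuous_apply j)
  exact this.measurableSet

theorem perm_measurePreserving (m : ℕ) (σ : Equiv.Perm (Fin m)) :
    MeasurePreserving (fun u : Fin m → ℝ => u ∘ σ) volume volume := by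
  have h := volume_measurePreserving_piCongrLeft (fun _ : Fin m => ℝ) σ.symm
  convert h using 1
  funext u
  funext i
  have := MeasurableEquiv.piCongrLeft_apply_apply σ.symm (β := fun _ => ℝ) u (σ i)
  simpa using this.symm

theorem diag_null (m : ℕ) (i j : Fin m) (hij : i ≠ j) :
    volume {u : Fin m → ℝ | u i = u j} = 0 := by
  let φ : (Fin m → ℝ) →ₗ[ℝ] ℝ := 
    LinearMap.proj (R := ℝ) (φ := fun _ : Fin m => ℝ) i - LinearMap.proj j
  have h := Measure.addHaar_submodule (volume : Measure (Fin m → ℝ)) (LinearMap.ker φ) (by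
    intro h
    have : (Pi.single i 1 : Fin m → ℝ) ∈ LinearMap.ker φ := by rw [h]; trivial
    simp [φ, hij.symm] at this)
  convert h using 2
  ext u
  simp [φ, sub_eq_zero]

theorem simplex_volume (m : ℕ) :
    (m.factorial : ENNReal) * volume (simplexSet m) = 1 := by
  have h1 : volume (⋃ σ : Equiv.Perm (Fin m), {u : Fin m → ℝ | u ∘ σ ∈ simplexSet m}) = 1 := by
    rw [simplex_iUnion, Real.volume_Icc_pi]
    simp
  rw [measure_iUnion₀] at h1
  · have h2 : ∀ σ : Equiv.Perm (Fin m),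
        volume {u : Fin m → ℝ | u ∘ σ ∈ simplexSet m} = volume (simplexSet m) := fun σ =>
      (perm_measurePreserving m σ).measure_preimage (simplex_measurable m).nullMeasurableSet
    simp_rw [h2] at h1
    rw [tsum_fintype] at h1
    simpa [Fintype.card_perm] using h1
  · intro σ τ hne
    change volume (_ ∩ _) = 0
    refine measure_mono_null (t := ⋃ i : Fin m, ⋃ j : Fin m, ⋃ (_ : i ≠ j),
      {u : Fin m → ℝ | u i = u j}) ?_ ?_
    · rintro u ⟨⟨-, h1⟩, ⟨-, h2⟩⟩
      have h3 := Tuple.unique_monotone (f := u) (σ := σ) (τ := τ)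
        (fun i j hij => h1 i j hij) (fun i j hij => h2 i j hij)
      obtain ⟨k, hk⟩ : ∃ k, σ k ≠ τ k := by
        by_contra! hc
        exact hne (Equiv.ext hc)
      simp only [Set.mem_iUnion]
      exact ⟨σ k, τ k, hk, congrFun h3 k⟩
    · simp only [measure_iUnion_null_iff]
      exact fun i j hij => diag_null m i j hij
  · intro σ
    exact ((perm_measurePreserving m σ).measurable (simplex_measurable m)).nullMeasurableSet

theorem simplex_integral (m : ℕ) :
    (∫ _u in simplexSet m, (1 : ℝ)) = ((m.factorial : ℝ))⁻¹ := by
  have h := congrArg ENNReal.toReal (simplex_volume m)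
  rw [ENNReal.toReal_mul] at h
  simp only [ENNReal.toReal_natCast, ENNReal.toReal_one] at h
  rw [setIntegral_const, smul_eq_mul, mul_one]
  exact eq_inv_of_mul_eq_one_right h

/-! ### The operators on `c_{2n}` -/

theorem pderiv_prod_notMem {ι σ : Type*} (s : Finset ι) (f : ι → σ) (a : σ)
    (h : ∀ i ∈ s, f i ≠ a) :
    pderiv a (∏ i ∈ s, (X (f i) : MvPolynomial σ Kc)) = 0 := by
  classical
  induction s using Finset.induction_on with
  | empty => simp
  | insert b s hb ih =>
    rw [Finset.prod_insert hb, pderiv_mul, ih fun i hi => h i (Finset.mem_insert_of_mem hi),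
      pderiv_X_of_ne (h b (Finset.mem_insert_self _ _))]
    simp

theorem list_Dop (n : ℕ) (σ τ : Equiv.Perm (Fin (2*n))) (l : List (Fin (2*n))) (hl : l.Nodup) :
    (l.map fun m => Dop n (2*n+1) m.succ (τ m)).prod
      (∏ i : Fin (2*n), (X (i.succ, σ i) : Tens n (2*n+1))) =
    if ∀ i ∈ l, τ i = σ i then
      ∏ i ∈ Finset.univ \ l.toFinset, (X (i.succ, σ i) : Tens n (2*n+1)) else 0 := by
  induction l with
  | nil => simp
  | cons a l ih =>
    rw [List.nodup_cons] at hl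
    rw [List.map_cons, List.prod_cons, Module.End.mul_apply, ih hl.2]
    by_cases hall : ∀ i ∈ l, τ i = σ i
    · rw [if_pos hall]
      have ha : a ∈ Finset.univ \ l.toFinset := by simp [hl.1]
      have hs : Finset.univ \ (a :: l).toFinset = (Finset.univ \ l.toFinset).erase a := by
        ext x; simp
      rw [hs, ← Finset.mul_prod_erase _ _ ha]
      change pderiv (a.succ, τ a) _ = _
      rw [pderiv_mul, pderiv_prod_notMem _ (fun i : Fin (2*n) => (i.succ, σ i))]
      · by_cases hta : τ a = σ a
        · rw [if_pos (by simpa [hta] using hall), hta, pderiv_X_self]; simp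
        · rw [if_neg (by simp [hta]), pderiv_X_of_ne (by simpa using fun h => hta h.symm)]; simp
      · intro i hi h
        exact (Finset.mem_erase.1 hi).1 (Fin.succ_injective _ (Prod.ext_iff.1 h).1)
    · rw [if_neg hall, if_neg (by
        intro h; exact hall fun i hi => h i (List.mem_cons_of_mem _ hi)), map_zero]

theorem elemT_eq (n : ℕ) (σ : Equiv.Perm (Fin (2*n))) :
    elemT (Fin.cons 1 (fun i : Fin (2*n) => (X (σ i) : Apol n))) =
      ∏ i : Fin (2*n), (X (i.succ, σ i) : Tens n (2*n+1)) := by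
  unfold elemT
  rw [Fin.prod_univ_succ]
  simp [embA]

theorem ofFn_Dop (n : ℕ) (σ τ : Equiv.Perm (Fin (2*n))) :
    (List.ofFn (fun m : Fin (2*n) => Dop n (2*n+1) m.succ (τ m))).prod
      (elemT (Fin.cons 1 (fun i : Fin (2*n) => (X (σ i) : Apol n)))) =
    if τ = σ then 1 else 0 := by
  rw [elemT_eq, List.ofFn_eq_map, list_Dop n σ τ _ (List.nodup_finRange _)]
  simp [Equiv.ext_iff]

theorem piOp_c2n (n : ℕ) :
    piOp n (c2n n) = C (algebraMap ℂ Kc ((2*n).factorial : ℂ)) := by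
  have hs : ∀ σ : Equiv.Perm (Fin (2*n)),
      ((Equiv.Perm.sign σ : ℤ)) * (Equiv.Perm.sign σ : ℤ) = 1 := fun σ => by
    rw [← Units.val_mul, Int.units_mul_self, Units.val_one]
  unfold piOp c2n
  simp only [LinearMap.sum_apply, map_sum, LinearMap.smul_apply, map_zsmul, ofFn_Dop]
  simp only [smul_ite, smul_zero, Finset.sum_ite_eq', Finset.mem_univ, if_true,
    smul_smul, hs, one_smul, Finset.sum_const, Finset.card_univ, Fintype.card_perm,
    Fintype.card_fin]
  simp

theorem alphaOp_C (n k : ℕ) (i j : Fin k) (c : Kc) : alphaOp n k i j (C c) = 0 := by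
  simp [alphaOp, Dop, LinearMap.sum_apply]

theorem alphaPowProd_C (n k : ℕ) (K : Pairs k → ℕ) (hK : K ≠ 0) (c : Kc) :
    alphaPowProd n k K (C c) = 0 := by
  have key : ∀ l : List (Pairs k), (l.map fun p : Pairs k => alphaOp n k p.1.1 p.1.2 ^ (K p)).prod
      (C c) = if ∀ p ∈ l, K p = 0 then C c else 0 := by
    intro l
    induction l with
    | nil => simp
    | cons a l ih =>
      rw [List.map_cons, List.prod_cons, Module.End.mul_apply, ih]
      by_cases h : ∀ p ∈ l, K p = 0
      · rw [if_pos h]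
        by_cases ha : K a = 0
        · rw [if_pos (by simpa [ha] using h), ha]; simp
        · rw [if_neg (by simp [ha])]
          obtain ⟨t, ht⟩ := Nat.exists_eq_succ_of_ne_zero ha
          rw [ht, pow_succ, Module.End.mul_apply, alphaOp_C, map_zero]
      · rw [if_neg h, if_neg (by
          intro h'; exact h fun p hp => h' p (List.mem_cons_of_mem _ hp)), map_zero]
  unfold alphaPowProd
  rw [key, if_neg]
  intro h
  exact hK (funext fun p => h p (by simp))

/-- `τ_{2n}(c_{2n}) = 1`. -/
theorem tau_c2n (n : ℕ) : tau n (c2n n) = 1 := by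
  unfold tau
  rw [piOp_c2n, Finset.sum_eq_single (0 : Pairs (2*n+1) → ℕ)]
  · have h1 : alphaPowProd n (2*n+1) 0 = 1 := by
      simp [alphaPowProd]
    rw [h1]
    simp only [Pi.zero_apply, pow_zero, Finset.prod_const_one, simplex_integral,
      Nat.factorial_zero, Finset.sum_const_zero, Module.End.one_apply, constantCoeff_C,
      Nat.cast_one, inv_one, mul_one, smul_eq_mul]
    rw [← map_mul]
    have h2 : ((2*n).factorial : ℂ) ≠ 0 := by exact_mod_cast (2*n).factorial_ne_zero
    rw [Complex.ofReal_inv, Complex.ofReal_natCast, inv_mul_cancel₀ h2, map_one]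
  · intro K _ hK
    rw [alphaPowProd_C _ _ _ hK, map_zero, smul_zero]
  · intro h
    exact absurd (by simp) h

end
end

section
/- For all pairwise distinct complex numbers x, y, z: ∫∫_{0≤u_1≤u_2≤1} exp((1−2u_1)x + (2u_1−2u_2+1)y + (2u_2−1)z) du_1 du_2 = −[(x−y)e^{x+y−z} + (y−z)e^{y+z−x} + (z−x)e^{z+x−y}] / (4(x−y)(y−z)(z−x)). Consequently, writing F(x,y,z) ∈ ℂ[[x,y,z]] for the Taylor expansion at the origin of this (analytically continued) function, one has τ_2 = μ_2 ∘ F(εα_{01}, εα_{12}, εα_{20}) ∘ π_2 on A^pol_2 ⊗ A^pol_2 ⊗ A^pol_2. -/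
noncomputable section
open MvPolynomial MeasureTheory

/-- The simplex `{0 ≤ u_1 ≤ u_2 ≤ 1} ⊂ ℝ²`. -/
def delta2 : Set (Fin 2 → ℝ) := {u | 0 ≤ u 0 ∧ u 0 ≤ u 1 ∧ u 1 ≤ 1}

/-- The entire function `F(x,y,z) = ∫∫_{0≤u_1≤u_2≤1} e^{(1−2u_1)x+(2u_1−2u_2+1)y+(2u_2−1)z} du`,
whose Taylor expansion at the origin is used below. -/
def Ffun (x y z : ℂ) : ℂ :=
  ∫ u in delta2, Complex.exp ((1 - 2*(u 0 : ℝ))*x + (2*(u 0 : ℝ) - 2*(u 1 : ℝ) + 1)*y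
    + (2*(u 1 : ℝ) - 1)*z)

/-- The Taylor coefficient of `F` at the origin in multidegree `(a,b,c)`. -/
def Fcoeff (a b c : ℕ) : ℂ :=
  ((a.factorial * b.factorial * c.factorial : ℕ) : ℂ)⁻¹ *
    ((∫ u in delta2,
        (1 - 2*u 0)^a * (2*u 0 - 2*u 1 + 1)^b * (2*u 1 - 1)^c : ℝ) : ℂ)


lemma Ffun_eq_iter (x y z : ℂ) : Ffun x y z =
    ∫ t in (0:ℝ)..1, ∫ s in (0:ℝ)..t, Complex.exp ((1 - 2*(s:ℂ))*x + (2*(s:ℂ) - 2*(t:ℂ) + 1)*y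
    + (2*(t:ℂ) - 1)*z) := by
  set g : ℝ × ℝ → ℂ := fun p => Complex.exp ((1 - 2*(p.1:ℂ))*x + (2*(p.1:ℂ) - 2*(p.2:ℂ) + 1)*y
    + (2*(p.2:ℂ) - 1)*z) with hg
  set S : Set (ℝ × ℝ) := {p | 0 ≤ p.1 ∧ p.1 ≤ p.2 ∧ p.2 ≤ 1} with hS
  have hgc : Continuous g := by fun_prop
  have hSc : IsClosed S := by
    refine (isClosed_le continuous_const continuous_fst).inter
      ((isClosed_le continuous_fst continuous_snd).inter
        (isClosed_le continuous_snd continuous_const))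
  have hSk : IsCompact S := by
    refine (isCompact_Icc (a := ((0:ℝ),(0:ℝ))) (b := ((1:ℝ),(1:ℝ)))).of_isClosed_subset hSc ?_
    rintro ⟨a, b⟩ ⟨h1, h2, h3⟩
    simp only at h1 h2 h3
    exact ⟨⟨h1, h1.trans h2⟩, ⟨h2.trans h3, h3⟩⟩
  have hint : IntegrableOn g S := hgc.continuousOn.integrableOn_compact hSk
  have h1 : Ffun x y z = ∫ p in S, g p := by
    have := (volume_preserving_finTwoArrow ℝ).setIntegral_preimage_emb
      (MeasurableEquiv.finTwoArrow (α := ℝ)).measurableEmbedding g S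
    rw [← this]
    rfl
  rw [h1, ← integral_indicator hSc.measurableSet, Measure.volume_eq_prod,
    integral_prod_symm _ (by
      rw [← Measure.volume_eq_prod]
      exact (integrable_indicator_iff hSc.measurableSet).2 hint),
    intervalIntegral.integral_of_le zero_le_one, ← integral_Icc_eq_integral_Ioc,
    ← integral_indicator measurableSet_Icc]
  congr 1
  ext t
  by_cases ht : t ∈ Set.Icc (0:ℝ) 1
  · rw [Set.indicator_of_mem ht, intervalIntegral.integral_of_le ht.1,
      ← integral_Icc_eq_integral_Ioc, ← integral_indicator measurableSet_Icc]
    congr 1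
    ext s
    by_cases hs : s ∈ Set.Icc 0 t
    · rw [Set.indicator_of_mem hs, Set.indicator_of_mem (show (s,t) ∈ S from ⟨hs.1, hs.2, ht.2⟩)]
    · rw [Set.indicator_of_notMem hs, Set.indicator_of_notMem]
      exact fun h => hs ⟨h.1, h.2.1⟩
  · rw [Set.indicator_of_notMem ht, ← integral_zero ℝ ℂ]
    congr 1
    ext s
    rw [Set.indicator_of_notMem]
    exact fun h => ht ⟨h.1.trans h.2.1, h.2.2⟩

lemma Ffun_closed (x y z : ℂ) (hxy : x ≠ y) (hyz : y ≠ z) (hzx : z ≠ x) :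
    Ffun x y z =
        -((x-y)*Complex.exp (x+y-z) + (y-z)*Complex.exp (y+z-x) + (z-x)*Complex.exp (z+x-y))
          / (4*(x-y)*(y-z)*(z-x)) := by
  have hA : 2*(y-x) ≠ 0 := mul_ne_zero two_ne_zero (sub_ne_zero.2 hxy.symm)
  have hB : 2*(z-y) ≠ 0 := mul_ne_zero two_ne_zero (sub_ne_zero.2 hyz.symm)
  have hC : 2*(z-x) ≠ 0 := mul_ne_zero two_ne_zero (sub_ne_zero.2 hzx)
  have h1 := sub_ne_zero.2 hxy
  have h1' := sub_ne_zero.2 hxy.symm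
  have h2 := sub_ne_zero.2 hyz
  have h2' := sub_ne_zero.2 hyz.symm
  have h3 := sub_ne_zero.2 hzx
  rw [Ffun_eq_iter]
  have inner : ∀ t : ℝ, (∫ s in (0:ℝ)..t, Complex.exp ((1 - 2*(s:ℂ))*x
      + (2*(s:ℂ) - 2*(t:ℂ) + 1)*y + (2*(t:ℂ) - 1)*z)) =
      Complex.exp (x+y-z) / (2*(y-x)) *
        (Complex.exp (2*(z-x)*t) - Complex.exp (2*(z-y)*t)) := by
    intro t
    have e : ∀ s : ℝ, Complex.exp ((1 - 2*(s:ℂ))*x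
      + (2*(s:ℂ) - 2*(t:ℂ) + 1)*y + (2*(t:ℂ) - 1)*z) =
      (Complex.exp (x+y-z) * Complex.exp (2*(z-y)*t)) * Complex.exp (2*(y-x)*s) := by
      intro s
      rw [← Complex.exp_add, ← Complex.exp_add]
      congr 1; ring
    simp_rw [e]
    rw [intervalIntegral.integral_const_mul, integral_exp_mul_complex hA]
    have e2 : Complex.exp (2*(z-x)*t) = Complex.exp (2*(z-y)*t) * Complex.exp (2*(y-x)*t) := by
      rw [← Complex.exp_add]; congr 1; ring
    rw [e2]
    simp only [Complex.ofReal_zero, mul_zero, Complex.exp_zero]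
    ring
  simp_rw [inner]
  rw [intervalIntegral.integral_const_mul, intervalIntegral.integral_sub
    (Continuous.intervalIntegrable (by fun_prop) _ _)
    (Continuous.intervalIntegrable (by fun_prop) _ _),
    integral_exp_mul_complex hC, integral_exp_mul_complex hB]
  have e1 : Complex.exp (y+z-x) = Complex.exp (x+y-z) * Complex.exp (2*(z-x)) := by
    rw [← Complex.exp_add]; congr 1; ring
  have e2 : Complex.exp (z+x-y) = Complex.exp (x+y-z) * Complex.exp (2*(z-y)) := by
    rw [← Complex.exp_add]; congr 1; ring
  rw [e1, e2]
  simp only [Complex.ofReal_zero, mul_zero, Complex.exp_zero, Complex.ofReal_one, mul_one]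
  generalize Complex.exp (2*(z-x)) = P
  generalize Complex.exp (2*(z-y)) = Q
  generalize Complex.exp (x+y-z) = R
  have k1 : y - x = -(x-y) := by ring
  have k2 : z - y = -(y-z) := by ring
  rw [k1, k2]
  field_simp
  ring

lemma Dop_commute (n k : ℕ) (i j : Fin k) (v w : Fin (2*n)) :
    Commute (Dop n k i v) (Dop n k j w) := by
  have h : ⁅(pderiv (i, v) : Derivation Kc (Tens n k) (Tens n k)),
      (pderiv (j, w) : Derivation Kc (Tens n k) (Tens n k))⁆ = 0 := by
    apply MvPolynomial.derivation_ext
    intro q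
    rw [Derivation.commutator_apply]
    simp [pderiv_X, Pi.single_apply, apply_ite]
  apply LinearMap.ext
  intro f
  have h2 := congrArg (fun D : Derivation Kc (Tens n k) (Tens n k) => D f) h
  simp only [Derivation.commutator_apply] at h2
  exact sub_eq_zero.1 h2

lemma alpha_commute (n k : ℕ) (i j i' j' : Fin k) :
    Commute (alphaOp n k i j) (alphaOp n k i' j') := by
  unfold alphaOp
  refine Commute.smul_left (Commute.smul_right ?_ _) _
  refine Commute.sum_left _ _ _ fun r _ => Commute.sum_right _ _ _ fun r' _ => ?_
  have D := Dop_commute n k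
  have E : ∀ a b c d v1 v2 v3 v4, Commute (Dop n k a v1 * Dop n k b v2)
      (Dop n k c v3 * Dop n k d v4) := fun a b c d v1 v2 v3 v4 =>
    ((D _ _ _ _).mul_right (D _ _ _ _)).mul_left ((D _ _ _ _).mul_right (D _ _ _ _))
  have csub : ∀ a b c : Module.End Kc (Tens n k), Commute a b → Commute a c →
      Commute a (b - c) := by
    intro a b c hb hc
    apply LinearMap.ext
    intro f
    have hb' : a (b f) = b (a f) := LinearMap.congr_fun hb f
    have hc' : a (c f) = c (a f) := LinearMap.congr_fun hc f
    change a (b f - c f) = b (a f) - c (a f)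
    rw [map_sub, hb', hc']
  exact (csub _ _ _ (csub _ _ _ (E _ _ _ _ _ _ _ _) (E _ _ _ _ _ _ _ _)).symm
    (csub _ _ _ (E _ _ _ _ _ _ _ _) (E _ _ _ _ _ _ _ _)).symm).symm

lemma alpha_swap (n k : ℕ) (i j : Fin k) : alphaOp n k i j = - alphaOp n k j i := by
  apply LinearMap.ext
  intro f
  have D : ∀ a b v w, Dop n k a v (Dop n k b w f) = Dop n k b w (Dop n k a v f) :=
    fun a b v w => LinearMap.congr_fun (Dop_commute n k a b v w) f
  simp only [alphaOp, LinearMap.neg_apply, LinearMap.smul_apply, LinearMap.sum_apply,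
    LinearMap.sub_apply, Module.End.mul_apply]
  rw [← smul_neg, ← Finset.sum_neg_distrib]
  congr 1
  refine Finset.sum_congr rfl fun r _ => ?_
  rw [D i j, D i j, neg_sub]

/-- The three pairs, in the cyclic order used in the formula. -/
def pr3 : Fin 3 → Pairs (2*1+1) :=
  ![⟨((0:Fin 3),(1:Fin 3)), by decide⟩, ⟨((1:Fin 3),(2:Fin 3)), by decide⟩,
    ⟨((0:Fin 3),(2:Fin 3)), by decide⟩]

lemma pr3_bij : Function.Bijective pr3 := by decide

def pr3e : Fin 3 ≃ Pairs (2*1+1) := Equiv.ofBijective pr3 pr3_bij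

lemma prod_pairs {M : Type*} [CommMonoid M] (f : Pairs (2*1+1) → M) :
    ∏ p, f p = f (pr3 0) * f (pr3 1) * f (pr3 2) := by
  rw [← pr3e.prod_comp, Fin.prod_univ_three]; rfl

lemma sum_pairs {M : Type*} [AddCommMonoid M] (f : Pairs (2*1+1) → M) :
    ∑ p, f p = f (pr3 0) + f (pr3 1) + f (pr3 2) := by
  rw [← pr3e.sum_comp, Fin.sum_univ_three]; rfl

lemma alphaPowProd_eq (K : Pairs (2*1+1) → ℕ) : alphaPowProd 1 (2*1+1) K =
    alphaOp 1 (2*1+1) 0 1 ^ (K (pr3 0)) * alphaOp 1 (2*1+1) 1 2 ^ (K (pr3 1))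
      * alphaOp 1 (2*1+1) 0 2 ^ (K (pr3 2)) := by
  unfold alphaPowProd
  have hp : (Finset.univ : Finset (Pairs (2*1+1))).toList.Perm [pr3 0, pr3 1, pr3 2] := by
    apply List.perm_of_nodup_nodup_toFinset_eq (Finset.nodup_toList _) (by decide)
    rw [Finset.toList_toFinset]
    decide
  rw [List.Perm.prod_eq' (hp.map _)]
  · simp only [List.map_cons, List.map_nil, List.prod_cons, List.prod_nil, mul_one, mul_assoc]
    rfl
  · rw [List.pairwise_map]
    exact List.pairwise_of_forall fun p q => (alpha_commute _ _ _ _ _ _).pow_pow _ _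

lemma simplex_eq : simplexSet (2*1) = delta2 := by
  ext u
  constructor
  · rintro ⟨h1, h2⟩
    exact ⟨(h1 0).1, h2 0 1 (by decide), (h1 1).2⟩
  · rintro ⟨h1, h2, h3⟩
    have a0 : 0 ≤ u 0 ∧ u 0 ≤ 1 := ⟨h1, h2.trans h3⟩
    have a1 : 0 ≤ u 1 ∧ u 1 ≤ 1 := ⟨h1.trans h2, h3⟩
    refine ⟨fun i => ?_, fun i j hij => ?_⟩
    · match i with
      | 0 => exact a0
      | 1 => exact a1
    · match i, j, hij with
      | 0, 0, _ => exact le_rfl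
      | 0, 1, _ => exact h2
      | 1, 1, _ => exact le_rfl
      | 1, 0, h => exact absurd h (by decide)

lemma tau_eq (a : Tens 1 (2*1+1)) : tau 1 a =
        ∑ K ∈ Fintype.piFinset (fun _ : Fin 3 => Finset.range (a.totalDegree + 1)),
          (algebraMap ℂ Kc (Fcoeff (K 0) (K 1) (K 2)) * eps ^ (K 0 + K 1 + K 2)) •
            constantCoeff
              ((alphaOp 1 (2*1+1) 0 1 ^ (K 0) * alphaOp 1 (2*1+1) 1 2 ^ (K 1)
                * alphaOp 1 (2*1+1) 2 0 ^ (K 2)) (piOp 1 a)) := by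
  unfold tau
  refine Finset.sum_equiv (Equiv.arrowCongr pr3e.symm (Equiv.refl ℕ)) ?_ ?_
  · intro K
    simp only [Fintype.mem_piFinset]
    exact ⟨fun h i => h _, fun h p => by simpa using h (pr3e.symm p)⟩
  · intro K _
    have hK : ∀ i, (Equiv.arrowCongr pr3e.symm (Equiv.refl ℕ)) K i = K (pr3 i) := fun i => rfl
    simp only [hK]
    rw [alphaPowProd_eq, simplex_eq, sum_pairs, prod_pairs, alpha_swap 1 (2*1+1) 2 0]
    generalize hk0 : K (pr3 0) = k0
    generalize hk1 : K (pr3 1) = k1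
    generalize hk2 : K (pr3 2) = k2
    have hI : ∀ u : Fin (2*1) → ℝ, (∏ p : Pairs (2*1+1),
        (2 * cons0 (2*1) u p.1.1 - 2 * cons0 (2*1) u p.1.2 + 1) ^ (K p)) =
        (-1)^k2 * ((1 - 2*u 0)^k0 * (2*u 0 - 2*u 1 + 1)^k1 * (2*u 1 - 1)^k2) := by
      intro u
      rw [prod_pairs, hk0, hk1, hk2]
      have c0 : cons0 (2*1) u (pr3 0).1.1 = 0 := rfl
      have c1 : cons0 (2*1) u (pr3 0).1.2 = u 0 := rfl
      have c2 : cons0 (2*1) u (pr3 1).1.1 = u 0 := rfl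
      have c3 : cons0 (2*1) u (pr3 1).1.2 = u 1 := rfl
      have c4 : cons0 (2*1) u (pr3 2).1.1 = 0 := rfl
      have c5 : cons0 (2*1) u (pr3 2).1.2 = u 1 := rfl
      rw [c0, c1, c2, c3, c4, c5,
        show 2 * (0:ℝ) - 2 * u 1 + 1 = (-1) * (2 * u 1 - 1) by ring, mul_pow]
      ring
    simp_rw [hI]
    rw [integral_const_mul]
    unfold Fcoeff
    have hneg : ∀ f : Module.End Kc (Tens 1 (2*1+1)), (-f)^k2 = ((-1:Kc)^k2) • f^k2 := by
      intro f
      rw [← neg_one_smul Kc f, smul_pow]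
    rw [hneg, mul_smul_comm, LinearMap.smul_apply, MvPolynomial.constantCoeff_smul, smul_smul]
    congr 1
    push_cast
    simp only [map_mul, map_pow, map_neg, map_one, mul_inv]
    ring

/-- for pairwise distinct `x,y,z ∈ ℂ`,
`F(x,y,z) = −[(x−y)e^{x+y−z} + (y−z)e^{y+z−x} + (z−x)e^{z+x−y}]/(4(x−y)(y−z)(z−x))`;
consequently, `τ_2 = μ_2 ∘ F(εα_{01}, εα_{12}, εα_{20}) ∘ π_2` where `F` is expanded as
its Taylor series at the origin. -/
theorem tau2_formula :
    (∀ x y z : ℂ, x ≠ y → y ≠ z → z ≠ x →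
      Ffun x y z =
        -((x-y)*Complex.exp (x+y-z) + (y-z)*Complex.exp (y+z-x) + (z-x)*Complex.exp (z+x-y))
          / (4*(x-y)*(y-z)*(z-x))) ∧
    (∀ a : Tens 1 (2*1+1),
      tau 1 a =
        ∑ K ∈ Fintype.piFinset (fun _ : Fin 3 => Finset.range (a.totalDegree + 1)),
          (algebraMap ℂ Kc (Fcoeff (K 0) (K 1) (K 2)) * eps ^ (K 0 + K 1 + K 2)) •
            constantCoeff
              ((alphaOp 1 (2*1+1) 0 1 ^ (K 0) * alphaOp 1 (2*1+1) 1 2 ^ (K 1)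
                * alphaOp 1 (2*1+1) 2 0 ^ (K 2)) (piOp 1 a))) := by
  exact ⟨Ffun_closed, tau_eq⟩

end
end
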